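/- Suppose Q(u) ≥ 0 for every u ∈ C_c^∞(Ω), and let v be a positive supersolution of Q'(u) = 0 in Ω. If there exists a nonempty open set B with compact closure contained in Ω such that c_B = 0, then for every sequence u_k ∈ C_c^∞(Ω) with u_k ≥ 0, ∫_B u_k^p dx = 1 for all k, and Q(u_k) → 0, one has u_k → c v in L^p_loc(Ω) (i.e., ∫_K |u_k − c v|^p dx → 0 for every compact K ⊆ Ω), where c = (∫_B v^p dx)^{−1/p}. In particular Q admits a ground state. -/

import Mathlib

open MeasureTheory Filter
open scoped RealInnerProductSpace Topology

noncomputable section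

/-- Euclidean space `ℝ^d`. -/
abbrev Euc (d : ℕ) := EuclideanSpace ℝ (Fin d)

/-- A test function on `Ω`: smooth with compact support contained in `Ω`. -/
def IsTestFun {d : ℕ} (Ω : Set (Euc d)) (u : Euc d → ℝ) : Prop :=
  ContDiff ℝ (⊤ : ℕ∞) u ∧ HasCompactSupport u ∧ tsupport u ⊆ Ω

/-- The energy functional `Q(u) = ∫_Ω (|∇u|^p + V |u|^p) dx`. -/
def energyQ {d : ℕ} (Ω : Set (Euc d)) (V : Euc d → ℝ) (p : ℝ) (u : Euc d → ℝ) : ℝ :=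
  ∫ x in Ω, (‖gradient u x‖ ^ p + V x * |u x| ^ p)

/-- `V` is measurable and bounded on every compact subset of `Ω`. -/
def LocBddPotential {d : ℕ} (Ω : Set (Euc d)) (V : Euc d → ℝ) : Prop :=
  Measurable V ∧ ∀ K : Set (Euc d), K ⊆ Ω → IsCompact K → ∃ C : ℝ, ∀ x ∈ K, |V x| ≤ C

/-- A positive supersolution of `Q'(u) = 0` in `Ω`. -/
def IsPositiveSupersolution {d : ℕ} (Ω : Set (Euc d)) (V : Euc d → ℝ) (p : ℝ)
    (v : Euc d → ℝ) : Prop :=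
  ContDiffOn ℝ 1 v Ω ∧ (∀ x ∈ Ω, 0 < v x) ∧
    ∀ φ : Euc d → ℝ, IsTestFun Ω φ → (∀ x, 0 ≤ φ x) →
      0 ≤ ∫ x in Ω, (‖gradient v x‖ ^ (p - 2) * ⟪gradient v x, gradient φ x⟫
            + V x * v x ^ (p - 1) * φ x)

/-- A positive (weak) solution of `Q'(u) = 0` in `Ω`. -/
def IsPositiveSolution {d : ℕ} (Ω : Set (Euc d)) (V : Euc d → ℝ) (p : ℝ)
    (v : Euc d → ℝ) : Prop :=
  ContDiffOn ℝ 1 v Ω ∧ (∀ x ∈ Ω, 0 < v x) ∧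
    ∀ φ : Euc d → ℝ, IsTestFun Ω φ →
      (∫ x in Ω, (‖gradient v x‖ ^ (p - 2) * ⟪gradient v x, gradient φ x⟫
            + V x * v x ^ (p - 1) * φ x)) = 0

/-- A null sequence for the functional `Q`. -/
def IsNullSequence {d : ℕ} (Ω : Set (Euc d)) (V : Euc d → ℝ) (p : ℝ)
    (u : ℕ → Euc d → ℝ) : Prop :=
  (∀ k, IsTestFun Ω (u k)) ∧ (∀ k x, 0 ≤ u k x) ∧
    ∃ B : Set (Euc d), IsOpen B ∧ IsCompact (closure B) ∧ closure B ⊆ Ω ∧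
      (∀ k, (∫ x in B, u k x ^ p) = 1) ∧
      Tendsto (fun k => energyQ Ω V p (u k)) atTop (𝓝 0)

/-- A ground state of `Q`: a positive `C¹` function on `Ω` which is the limit in
`L^p_loc(Ω)` of a null sequence. -/
def IsGroundState {d : ℕ} (Ω : Set (Euc d)) (V : Euc d → ℝ) (p : ℝ)
    (v : Euc d → ℝ) : Prop :=
  ContDiffOn ℝ 1 v Ω ∧ (∀ x ∈ Ω, 0 < v x) ∧
    ∃ u : ℕ → Euc d → ℝ, IsNullSequence Ω V p u ∧
      ∀ K : Set (Euc d), K ⊆ Ω → IsCompact K →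
        Tendsto (fun k => ∫ x in K, |u k x - v x| ^ p) atTop (𝓝 0)

/-- `Q` has a weighted spectral gap (is strictly positive) in `Ω`. -/
def HasSpectralGap {d : ℕ} (Ω : Set (Euc d)) (V : Euc d → ℝ) (p : ℝ) : Prop :=
  ∃ W : Euc d → ℝ, ContinuousOn W Ω ∧ (∀ x ∈ Ω, 0 < W x) ∧
    ∀ u : Euc d → ℝ, IsTestFun Ω u → (∫ x in Ω, W x * |u x| ^ p) ≤ energyQ Ω V p u

/-- `c_B`: the infimum of `Q(u)` over test functions with `∫_B |u|^p = 1`. -/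
def cB {d : ℕ} (Ω B : Set (Euc d)) (V : Euc d → ℝ) (p : ℝ) : ℝ :=
  sInf { q : ℝ | ∃ u : Euc d → ℝ, IsTestFun Ω u ∧ (∫ x in B, |u x| ^ p) = 1 ∧
    q = energyQ Ω V p u }

/-- The Picone Lagrangian `L(u,v)`. -/
def piconeL {d : ℕ} (p : ℝ) (u v : Euc d → ℝ) (x : Euc d) : ℝ :=
  ‖gradient u x‖ ^ p + (p - 1) * (u x / v x) ^ p * ‖gradient v x‖ ^ p
    - p * (u x / v x) ^ (p - 1) *
        (‖gradient v x‖ ^ (p - 2) * ⟪gradient u x, gradient v x⟫)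

section
open MeasureTheory Filter
open scoped RealInnerProductSpace Topology
noncomputable section

def Lag {E : Type*} [NormedAddCommGroup E] [InnerProductSpace ℝ E] (p : ℝ) (a b : E) : ℝ :=
  ‖a + b‖ ^ p - ‖a‖ ^ p - p * (‖a‖ ^ (p - 2) * ⟪a, b⟫)

lemma young_strict {p s t : ℝ} (hp : 1 < p) (hs : 0 < s) (ht : 0 ≤ t) (hst : t ≠ s) :
    p * s ^ (p - 1) * t < (p - 1) * s ^ p + t ^ p := by
  have h := one_add_mul_self_lt_rpow_one_add (s := t / s - 1) (by
    have : 0 ≤ t / s := by positivity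
    linarith) (by
      intro h
      apply hst
      field_simp at h
      linarith) hp
  have e1 : (1 + (t / s - 1)) ^ p = t ^ p / s ^ p := by
    rw [← Real.div_rpow ht hs.le]; congr 1; ring
  rw [e1, lt_div_iff₀ (by positivity)] at h
  have e2 : s ^ p = s ^ (p - 1) * s := by
    rw [← Real.rpow_add_one hs.ne']; congr 1; ring
  have e3 : (1 + p * (t / s - 1)) * s ^ p = s ^ p - p * s ^ p + p * s ^ (p - 1) * t := by
    have : t / s * s ^ p = s ^ (p - 1) * t := by rw [e2]; field_simp
    linear_combination p * this
  linarith

section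
variable {E : Type*} [NormedAddCommGroup E] [InnerProductSpace ℝ E]

lemma Lag_pos {p : ℝ} (hp : 1 < p) (a b : E) (hb : b ≠ 0) : 0 < Lag p a b := by
  unfold Lag
  by_cases ha : a = 0
  · subst ha
    have : 0 < ‖b‖ := norm_pos_iff.2 hb
    have h0 : (0 : ℝ) ^ p = 0 := Real.zero_rpow (by linarith)
    simp [h0]; positivity
  have hs : 0 < ‖a‖ := norm_pos_iff.2 ha
  have e1 : ‖a‖ ^ (p - 1) = ‖a‖ ^ (p - 2) * ‖a‖ := by
    rw [← Real.rpow_add_one hs.ne']; congr 1; ring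
  have e2 : ‖a‖ ^ p = ‖a‖ ^ (p - 2) * ‖a‖ * ‖a‖ := by
    rw [← Real.rpow_add_one hs.ne', ← Real.rpow_add_one hs.ne']; congr 1; ring
  have ei : ⟪a, a + b⟫ = ‖a‖ * ‖a‖ + ⟪a, b⟫ := by
    rw [inner_add_right, real_inner_self_eq_norm_mul_norm]
  have hpp : 0 < ‖a‖ ^ (p - 2) := by positivity
  have hc : ⟪a, a + b⟫ ≤ ‖a‖ * ‖a + b‖ := real_inner_le_norm _ _
  by_cases hn : ‖a + b‖ = ‖a‖
  · have hlt : ⟪a, a + b⟫ < ‖a‖ * ‖a + b‖ := by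
      refine lt_of_le_of_ne hc fun h => hb ?_
      rw [inner_eq_norm_mul_iff_real, hn] at h
      have := smul_right_injective E hs.ne' h
      simpa using this.symm
    rw [hn, ei] at hlt
    rw [hn]
    have : ⟪a, b⟫ < 0 := by linarith
    have := mul_neg_of_pos_of_neg hpp this
    nlinarith
  · have h := young_strict hp hs (norm_nonneg (a + b)) hn
    rw [e1] at h
    have h3 := mul_le_mul_of_nonneg_left hc (by positivity : 0 ≤ p * ‖a‖ ^ (p - 2))
    rw [ei] at h3
    nlinarith

lemma Lag_nonneg {p : ℝ} (hp : 1 < p) (a b : E) : 0 ≤ Lag p a b := by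
  by_cases hb : b = 0
  · subst hb; simp [Lag]
  · exact (Lag_pos hp a b hb).le

lemma continuous_norm_rpow_smul {p : ℝ} (hp : 1 < p) :
    Continuous (fun x : E × E => ‖x.1‖ ^ (p - 2) * ⟪x.1, x.2⟫) := by
  have h := (contDiff_norm_rpow (E := E) hp).continuous_fderiv one_ne_zero
  have h2 : Continuous (fun x : E × E => fderiv ℝ (fun x : E ↦ ‖x‖ ^ p) x.1 x.2) :=
    (h.comp continuous_fst).clm_apply continuous_snd
  have : (fun x : E × E => ‖x.1‖ ^ (p - 2) * ⟪x.1, x.2⟫) =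
      fun x : E × E => p⁻¹ * fderiv ℝ (fun x : E ↦ ‖x‖ ^ p) x.1 x.2 := by
    ext x
    rw [fderiv_norm_rpow _ hp]
    have : p ≠ 0 := by linarith
    simp; field_simp
  rw [this]
  fun_prop

lemma continuous_Lag {p : ℝ} (hp : 1 < p) : Continuous (fun x : E × E => Lag p x.1 x.2) := by
  unfold Lag
  have h := continuous_norm_rpow_smul (E := E) hp
  have h1 : Continuous (fun x : E × E => ‖x.1 + x.2‖ ^ p) :=
    Continuous.rpow_const (by fun_prop) (fun _ => Or.inr (by linarith))
  have h2 : Continuous (fun x : E × E => ‖x.1‖ ^ p) :=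
    Continuous.rpow_const (by fun_prop) (fun _ => Or.inr (by linarith))
  fun_prop

lemma Lag_smul {p : ℝ} (hp : 1 < p) {r : ℝ} (hr : 0 < r) (a b : E) :
    Lag p (r • a) (r • b) = r ^ p * Lag p a b := by
  unfold Lag
  rw [← smul_add]
  simp only [norm_smul, Real.norm_eq_abs, abs_of_pos hr, inner_smul_left, inner_smul_right]
  rw [Real.mul_rpow hr.le (norm_nonneg _), Real.mul_rpow hr.le (norm_nonneg _),
    Real.mul_rpow hr.le (norm_nonneg _)]
  have e2 : r ^ p = r ^ (p - 2) * r * r := by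
    rw [← Real.rpow_add_one hr.ne', ← Real.rpow_add_one hr.ne']; congr 1; ring
  rw [e2]
  simp
  ring

lemma Lag_coercive [FiniteDimensional ℝ E] {p : ℝ} (hp : 1 < p) {δ : ℝ} (hδ : 0 < δ) :
    ∃ C : ℝ, 0 ≤ C ∧ ∀ a b : E, ‖b‖ ^ p ≤ δ * ‖a‖ ^ p + C * Lag p a b := by
  have hp0 : 0 < p := by linarith
  let S : Set (E × E) := Metric.sphere 0 1 ∩ {x | δ * ‖x.1‖ ^ p ≤ ‖x.2‖ ^ p}
  have hScl : IsClosed {x : E × E | δ * ‖x.1‖ ^ p ≤ ‖x.2‖ ^ p} := by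
    apply isClosed_le
    · exact continuous_const.mul (Continuous.rpow_const (by fun_prop) (fun _ => Or.inr hp0.le))
    · exact (Continuous.rpow_const (by fun_prop) (fun _ => Or.inr hp0.le))
  have hSc : IsCompact S := (isCompact_sphere _ _).inter_right hScl
  have hpos : ∀ x ∈ S, 0 < Lag p x.1 x.2 := by
    rintro ⟨a, b⟩ ⟨h1, h2⟩
    apply Lag_pos hp
    rintro rfl
    simp only [Set.mem_setOf_eq, norm_zero, Real.zero_rpow hp0.ne'] at h2
    have ha : a = 0 := by
      by_contra ha
      have : 0 < ‖a‖ := norm_pos_iff.2 ha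
      have : 0 < δ * ‖a‖ ^ p := by positivity
      linarith
    subst ha
    simp at h1
  obtain ⟨m, hm, hmS⟩ : ∃ m : ℝ, 0 < m ∧ ∀ x ∈ S, m ≤ Lag p x.1 x.2 := by
    rcases S.eq_empty_or_nonempty with h | h
    · exact ⟨1, one_pos, by simp [h]⟩
    · obtain ⟨x, hx, hmin⟩ := hSc.exists_isMinOn h (continuous_Lag hp).continuousOn
      exact ⟨_, hpos x hx, fun y hy => hmin hy⟩
  refine ⟨m⁻¹, by positivity, fun a b => ?_⟩
  have hL := Lag_nonneg hp a b
  by_cases h : ‖b‖ ^ p ≤ δ * ‖a‖ ^ p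
  · have : 0 ≤ m⁻¹ * Lag p a b := by positivity
    linarith
  push Not at h
  have hne : ((a, b) : E × E) ≠ 0 := by
    intro h0
    simp only [Prod.mk_eq_zero] at h0
    simp [h0.1, h0.2, Real.zero_rpow hp0.ne'] at h
  set r := ‖((a, b) : E × E)‖ with hr
  have hr0 : 0 < r := norm_pos_iff.2 hne
  have hbr : ‖b‖ ≤ r := by rw [hr, Prod.norm_def]; exact le_max_right _ _
  have hmem : ((r⁻¹ • a, r⁻¹ • b) : E × E) ∈ S := by
    constructor
    · rw [mem_sphere_zero_iff_norm, ← Prod.smul_mk, norm_smul, ← hr]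
      simp [abs_of_pos hr0, hr0.ne']
    · simp only [Set.mem_setOf_eq, norm_smul, Real.norm_eq_abs, abs_of_pos (inv_pos.2 hr0)]
      rw [Real.mul_rpow (by positivity) (norm_nonneg _), Real.mul_rpow (by positivity) (norm_nonneg _)]
      have : 0 ≤ (r⁻¹) ^ p := by positivity
      nlinarith
  have h1 := hmS _ hmem
  simp only at h1
  rw [Lag_smul hp (inv_pos.2 hr0), Real.inv_rpow hr0.le] at h1
  have hrp : 0 < r ^ p := by positivity
  have h2 : m * r ^ p ≤ Lag p a b := by
    rw [← div_eq_inv_mul, le_div_iff₀ hrp] at h1; exact h1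
  have h3 : ‖b‖ ^ p ≤ r ^ p := Real.rpow_le_rpow (norm_nonneg _) hbr hp0.le
  have h4 : r ^ p ≤ m⁻¹ * Lag p a b := by
    rw [← div_eq_inv_mul, le_div_iff₀ hm]; linarith
  have : 0 ≤ δ * ‖a‖ ^ p := by positivity
  linarith
end
end
end

section
open MeasureTheory Filter
open scoped RealInnerProductSpace Topology
noncomputable section

lemma continuousOn_gradient {d : ℕ} {Ω : Set (Euc d)} (hΩ : IsOpen Ω) {v : Euc d → ℝ}
    (hv : ContDiffOn ℝ 1 v Ω) : ContinuousOn (fun x => gradient v x) Ω := by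
  have h := hv.continuousOn_fderiv_of_isOpen hΩ le_rfl
  exact (LinearIsometryEquiv.continuous _).comp_continuousOn h

lemma continuous_gradient' {d : ℕ} {v : Euc d → ℝ}
    (hv : ContDiff ℝ 1 v) : Continuous (fun x => gradient v x) := by
  have h := hv.continuous_fderiv one_ne_zero
  exact (LinearIsometryEquiv.continuous _).comp h

lemma norm_gradient_eq {d : ℕ} (v : Euc d → ℝ) (x : Euc d) :
    ‖gradient v x‖ = ‖fderiv ℝ v x‖ := by
  unfold gradient; simp

lemma gradient_eq_zero_of_notMem {d : ℕ} {f : Euc d → ℝ} {x : Euc d} (hx : x ∉ tsupport f) :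
    gradient f x = 0 := by
  have : fderiv ℝ f x = 0 := by
    by_contra h
    exact hx (support_fderiv_subset ℝ h)
  unfold gradient; simp [this]

lemma integrableOn_of_bdd {d : ℕ} {Ω K : Set (Euc d)} {f : Euc d → ℝ} (hΩ : IsOpen Ω)
    (hf : AEStronglyMeasurable f (volume.restrict Ω)) (hK : IsCompact K) {C : ℝ}
    (h0 : ∀ x ∈ Ω, x ∉ K → f x = 0) (hC : ∀ x ∈ Ω, x ∈ K → |f x| ≤ C) : IntegrableOn f Ω := by
  have hi : Integrable (K.indicator (fun _ => C)) (volume.restrict Ω) := by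
    apply Integrable.restrict
    rw [integrable_indicator_iff hK.measurableSet]
    exact integrableOn_const hK.measure_lt_top.ne
  refine Integrable.mono' hi hf ?_
  refine (ae_restrict_iff' hΩ.measurableSet).2 (Eventually.of_forall fun x hx => ?_)
  by_cases hxK : x ∈ K
  · simpa [hxK] using hC x hx hxK
  · simp [hxK, h0 x hx hxK]

lemma smooth_approx {d : ℕ} {Ω : Set (Euc d)} (hΩ : IsOpen Ω) {φ : Euc d → ℝ}
    (hφ : ContDiff ℝ 1 φ) (hc : HasCompactSupport φ) (hs : tsupport φ ⊆ Ω) (h0 : ∀ x, 0 ≤ φ x) :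
    ∃ K : Set (Euc d), IsCompact K ∧ K ⊆ Ω ∧ tsupport φ ⊆ K ∧ ∀ ε > 0, ∃ ψ : Euc d → ℝ,
      IsTestFun Ω ψ ∧ (∀ x, 0 ≤ ψ x) ∧ tsupport ψ ⊆ K ∧
      (∀ x, |ψ x - φ x| ≤ ε) ∧ ∀ x, ‖gradient ψ x - gradient φ x‖ ≤ ε := by
  obtain ⟨r, hr, hrΩ⟩ := hc.isCompact.exists_cthickening_subset_open hΩ hs
  have hKc : IsCompact (Metric.cthickening r (tsupport φ)) := hc.isCompact.cthickening
  refine ⟨_, hKc, hrΩ, Metric.self_subset_cthickening _, fun ε hε => ?_⟩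
  have hu1 : UniformContinuous φ := hc.uniformContinuous_of_continuous hφ.continuous
  have hu2 : UniformContinuous (fderiv ℝ φ) :=
    (hc.fderiv ℝ).uniformContinuous_of_continuous (hφ.continuous_fderiv one_ne_zero)
  obtain ⟨r1, hr1, h1⟩ := Metric.uniformContinuous_iff.1 hu1 ε hε
  obtain ⟨r2, hr2, h2⟩ := Metric.uniformContinuous_iff.1 hu2 ε hε
  let ρ : ℝ := min r (min r1 r2)
  have hρ : 0 < ρ := by positivity
  let b : ContDiffBump (0 : Euc d) := ⟨ρ / 2, ρ, by positivity, by linarith⟩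
  let ψ : Euc d → ℝ := convolution (b.normed volume) φ (ContinuousLinearMap.lsmul ℝ ℝ) volume
  have hψs : ContDiff ℝ (⊤ : ℕ∞) ψ := by
    refine b.hasCompactSupport_normed.contDiff_convolution_left _ ?_ hφ.continuous.locallyIntegrable
    exact b.contDiff_normed
  have hsup : Function.support ψ ⊆ Metric.cthickening r (tsupport φ) := by
    refine (support_convolution_subset _).trans ?_
    rw [b.support_normed_eq]
    rintro _ ⟨x, hx, y, hy, rfl⟩
    refine Metric.mem_cthickening_of_dist_le _ y _ _ (subset_tsupport _ hy) ?_
    have hx' : ‖x‖ < ρ := by simpa using hx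
    simp only [dist_eq_norm, add_sub_cancel_right]
    exact hx'.le.trans (min_le_left _ _)
  have hts : tsupport ψ ⊆ Metric.cthickening r (tsupport φ) :=
    closure_minimal hsup hKc.isClosed
  have hcs : HasCompactSupport ψ := hKc.of_isClosed_subset (isClosed_tsupport _) hts
  refine ⟨ψ, ⟨hψs, hcs, hts.trans hrΩ⟩, fun x => ?_, hts, fun x => ?_, fun x => ?_⟩
  · apply integral_nonneg
    intro t
    simp only [ContinuousLinearMap.lsmul_apply, smul_eq_mul]
    exact mul_nonneg (b.nonneg_normed _) (h0 _)
  · rw [← Real.dist_eq]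
    apply b.dist_normed_convolution_le hφ.continuous.aestronglyMeasurable
    intro y hy
    exact (h1 (lt_of_lt_of_le hy ((min_le_right _ _).trans (min_le_left _ _)))).le
  · have hd : fderiv ℝ ψ x = convolution (b.normed volume) (fderiv ℝ φ)
        (ContinuousLinearMap.lsmul ℝ ℝ) volume x := by
      have := hc.hasFDerivAt_convolution_right (ContinuousLinearMap.lsmul ℝ ℝ) (μ := volume)
        (f := b.normed volume) b.continuous_normed.locallyIntegrable hφ x
      rw [this.fderiv]
      rfl
    have hgr : ‖gradient ψ x - gradient φ x‖ = ‖fderiv ℝ ψ x - fderiv ℝ φ x‖ := by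
      unfold gradient
      rw [← map_sub, LinearIsometryEquiv.norm_map]
    rw [hgr, ← dist_eq_norm, hd]
    apply b.dist_normed_convolution_le (hφ.continuous_fderiv one_ne_zero).aestronglyMeasurable
    intro y hy
    exact (h2 (lt_of_lt_of_le hy ((min_le_right _ _).trans (min_le_right _ _)))).le

lemma norm_weight_le {E : Type*} [NormedAddCommGroup E] [InnerProductSpace ℝ E] {p : ℝ}
    (hp : 1 < p) (a h : E) : |‖a‖ ^ (p - 2) * ⟪a, h⟫| ≤ ‖a‖ ^ (p - 1) * ‖h‖ := by
  by_cases ha : a = 0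
  · subst ha; simp; positivity
  have hs : 0 < ‖a‖ := norm_pos_iff.2 ha
  have e1 : ‖a‖ ^ (p - 1) = ‖a‖ ^ (p - 2) * ‖a‖ := by
    rw [← Real.rpow_add_one hs.ne']; congr 1; ring
  rw [abs_mul, abs_of_nonneg (by positivity), e1, mul_assoc]
  gcongr
  exact abs_real_inner_le_norm a h

/-- weak-form integrand -/
def wkInt {d : ℕ} (V : Euc d → ℝ) (p : ℝ) (v φ : Euc d → ℝ) (x : Euc d) : ℝ :=
  ‖gradient v x‖ ^ (p - 2) * ⟪gradient v x, gradient φ x⟫ + V x * v x ^ (p - 1) * φ x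

lemma wkInt_meas {d : ℕ} {Ω : Set (Euc d)} (hΩ : IsOpen Ω) {p : ℝ} (hp : 1 < p) {V : Euc d → ℝ}
    (hV : LocBddPotential Ω V) {v : Euc d → ℝ} (hv1 : ContDiffOn ℝ 1 v Ω)
    {φ : Euc d → ℝ} (hφ : ContDiff ℝ 1 φ) :
    AEStronglyMeasurable (wkInt V p v φ) (volume.restrict Ω) := by
  unfold wkInt
  have hg := continuousOn_gradient hΩ hv1
  refine AEStronglyMeasurable.add ?_
    (AEStronglyMeasurable.fun_mul (AEStronglyMeasurable.fun_mul ?_ ?_) ?_)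
  · refine ContinuousOn.aestronglyMeasurable ?_ hΩ.measurableSet
    have h3 : ContinuousOn (fun x => (gradient v x, gradient φ x)) Ω :=
      hg.prodMk (continuous_gradient' hφ).continuousOn
    have h4 := (continuous_norm_rpow_smul (E := Euc d) hp).comp_continuousOn h3
    exact h4
  · exact hV.1.aestronglyMeasurable
  · refine ContinuousOn.aestronglyMeasurable ?_ hΩ.measurableSet
    exact hv1.continuousOn.rpow_const (fun _ _ => Or.inr (by linarith))
  · exact hφ.continuous.aestronglyMeasurable

lemma wkInt_bound {d : ℕ} {Ω K : Set (Euc d)} (hΩ : IsOpen Ω) {p : ℝ} (hp : 1 < p) {V : Euc d → ℝ}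
    (hV : LocBddPotential Ω V) {v : Euc d → ℝ} (hv1 : ContDiffOn ℝ 1 v Ω)
    (hK : IsCompact K) (hKΩ : K ⊆ Ω) : ∃ D : ℝ, 0 ≤ D ∧ ∀ x ∈ K,
      ‖gradient v x‖ ^ (p - 1) ≤ D ∧ |V x * v x ^ (p - 1)| ≤ D := by
  have hg := (continuousOn_gradient hΩ hv1).mono hKΩ
  have hg' : ContinuousOn (fun x => ‖gradient v x‖ ^ (p - 1)) K :=
    hg.norm.rpow_const (fun _ _ => Or.inr (by linarith))
  have hvp : ContinuousOn (fun x => v x ^ (p - 1)) K :=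
    (hv1.continuousOn.mono hKΩ).rpow_const (fun _ _ => Or.inr (by linarith))
  obtain ⟨D1, h1⟩ := hK.exists_bound_of_continuousOn hg'
  obtain ⟨D2, h2⟩ := hK.exists_bound_of_continuousOn hvp
  obtain ⟨D3, h3⟩ := hV.2 K hKΩ hK
  refine ⟨|D1| + |D3| * |D2|, by positivity, fun x hx => ⟨?_, ?_⟩⟩
  · have := h1 x hx
    rw [Real.norm_eq_abs] at this
    have h5 : 0 ≤ |D3| * |D2| := by positivity
    linarith [le_abs_self D1, le_abs_self (‖gradient v x‖ ^ (p - 1))]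
  · rw [abs_mul]
    have a1 := (h3 x hx).trans (le_abs_self _)
    have a2 := (h2 x hx).trans (le_abs_self _)
    rw [Real.norm_eq_abs] at a2
    have := mul_le_mul a1 a2 (abs_nonneg _) (abs_nonneg _)
    linarith [abs_nonneg D1]

lemma wkInt_integrable {d : ℕ} {Ω : Set (Euc d)} (hΩ : IsOpen Ω) {p : ℝ} (hp : 1 < p)
    {V : Euc d → ℝ}
    (hV : LocBddPotential Ω V) {v : Euc d → ℝ} (hv1 : ContDiffOn ℝ 1 v Ω)
    {φ : Euc d → ℝ} (hφ : ContDiff ℝ 1 φ) (hc : HasCompactSupport φ) (hs : tsupport φ ⊆ Ω) :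
    IntegrableOn (wkInt V p v φ) Ω := by
  obtain ⟨D, hD, hb⟩ := wkInt_bound hΩ hp hV hv1 hc.isCompact hs
  obtain ⟨M1, h1⟩ := hc.isCompact.exists_bound_of_continuousOn hφ.continuous.continuousOn
  obtain ⟨M2, h2⟩ := hc.isCompact.exists_bound_of_continuousOn
    (continuous_gradient' hφ).continuousOn
  refine integrableOn_of_bdd hΩ (wkInt_meas hΩ hp hV hv1 hφ) hc.isCompact (C := D * M2 + D * M1) ?_ ?_
  · intro x _ hx
    simp [wkInt, gradient_eq_zero_of_notMem hx, image_eq_zero_of_notMem_tsupport hx]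
  · intro x _ hx
    unfold wkInt
    refine (abs_add_le _ _).trans (add_le_add ?_ ?_)
    · refine (norm_weight_le hp _ _).trans ?_
      exact mul_le_mul (hb x hx).1 (h2 x hx) (norm_nonneg _) hD
    · rw [abs_mul]
      exact mul_le_mul (hb x hx).2 (h1 x hx) (abs_nonneg _) hD

lemma supersol_C1 {d : ℕ} {Ω : Set (Euc d)} (hΩ : IsOpen Ω) {p : ℝ} (hp : 1 < p) {V : Euc d → ℝ}
    (hV : LocBddPotential Ω V) {v : Euc d → ℝ} (hv : IsPositiveSupersolution Ω V p v)
    {φ : Euc d → ℝ} (hφ : ContDiff ℝ 1 φ) (hc : HasCompactSupport φ) (hs : tsupport φ ⊆ Ω)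
    (h0 : ∀ x, 0 ≤ φ x) : 0 ≤ ∫ x in Ω, wkInt V p v φ x := by
  obtain ⟨K, hK, hKΩ, hφK, happ⟩ := smooth_approx hΩ hφ hc hs h0
  obtain ⟨D, hD, hb⟩ := wkInt_bound hΩ hp hV hv.1 hK hKΩ
  have hI := wkInt_integrable hΩ hp hV hv.1 hφ hc hs
  apply le_of_forall_pos_le_add
  intro η hη
  set m : ℝ := 2 * D * volume.real K + 1 with hm
  have hmpos : 0 < m := by positivity
  obtain ⟨ψ, hψ, hψ0, hψK, e1, e2⟩ := happ (η / m) (by positivity)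
  have hψ1 : ContDiff ℝ 1 ψ := hψ.1.of_le (by exact_mod_cast le_top)
  have hIψ := wkInt_integrable hΩ hp hV hv.1 hψ1 hψ.2.1 hψ.2.2
  have hpos : 0 ≤ ∫ x in Ω, wkInt V p v ψ x := hv.2.2 ψ hψ hψ0
  have hle : ∫ x in Ω, wkInt V p v ψ x - wkInt V p v φ x ≤
      ∫ x in Ω, K.indicator (fun _ => 2 * D * (η / m)) x := by
    refine setIntegral_mono_on (hIψ.sub hI) ?_ hΩ.measurableSet ?_
    · apply Integrable.restrict
      rw [integrable_indicator_iff hK.measurableSet]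
      exact integrableOn_const hK.measure_lt_top.ne
    · intro x hx
      by_cases hxK : x ∈ K
      · simp only [hxK, Set.indicator_of_mem]
        have : wkInt V p v ψ x - wkInt V p v φ x =
          ‖gradient v x‖ ^ (p - 2) * ⟪gradient v x, gradient ψ x - gradient φ x⟫
            + V x * v x ^ (p - 1) * (ψ x - φ x) := by
          unfold wkInt; rw [inner_sub_right]; ring
        rw [this]
        have i1 := (le_abs_self _).trans
          (norm_weight_le hp (gradient v x) (gradient ψ x - gradient φ x))
        have i2 := mul_le_mul (hb x hxK).1 (e2 x) (norm_nonneg _) hD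
        have i3 := mul_le_mul (hb x hxK).2 (e1 x) (abs_nonneg _) hD
        rw [← abs_mul] at i3
        have i4 := le_abs_self (V x * v x ^ (p - 1) * (ψ x - φ x))
        linarith
      · have a1 : x ∉ tsupport ψ := fun h => hxK (hψK h)
        have a2 : x ∉ tsupport φ := fun h => hxK (hφK h)
        simp [hxK, wkInt, gradient_eq_zero_of_notMem a1, image_eq_zero_of_notMem_tsupport a1,
          gradient_eq_zero_of_notMem a2, image_eq_zero_of_notMem_tsupport a2]
  rw [integral_sub hIψ hI, integral_indicator hK.measurableSet,
    Measure.restrict_restrict hK.measurableSet, Set.inter_eq_left.2 hKΩ, setIntegral_const] at hle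
  have : volume.real K • (2 * D * (η / m)) ≤ η := by
    rw [smul_eq_mul]
    have : volume.real K * (2 * D * (η / m)) = (2 * D * volume.real K) * η / m := by ring
    rw [this, div_le_iff₀ hmpos, hm]
    nlinarith
  linarith
end
end

section
open MeasureTheory Filter
open scoped RealInnerProductSpace Topology
noncomputable section

lemma contDiff_of_supp {d : ℕ} {Ω : Set (Euc d)} (hΩ : IsOpen Ω) {u f : Euc d → ℝ}
    (hs : tsupport u ⊆ Ω) (hf : ContDiffOn ℝ 1 f Ω) (h0 : ∀ x, u x = 0 → f x = 0) :
    ContDiff ℝ 1 f := by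
  rw [contDiff_iff_contDiffAt]
  intro x
  by_cases hx : x ∈ tsupport u
  · exact hf.contDiffAt (hΩ.mem_nhds (hs hx))
  · have : f =ᶠ[𝓝 x] fun _ => 0 := by
      filter_upwards [(isClosed_tsupport u).isOpen_compl.mem_nhds hx] with y hy
      exact h0 y (image_eq_zero_of_notMem_tsupport hy)
    exact contDiffAt_const.congr_of_eventuallyEq this

lemma tsupport_sub_aux {d : ℕ} {u f : Euc d → ℝ} (h0 : ∀ x, u x = 0 → f x = 0) :
    tsupport f ⊆ tsupport u :=
  closure_mono fun x hx hu => hx (h0 x hu)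

lemma gradient_add_smul {d : ℕ} {f g h : Euc d → ℝ} {x : Euc d} {a b : ℝ}
    (H : fderiv ℝ f x = a • fderiv ℝ g x + b • fderiv ℝ h x) :
    gradient f x = a • gradient g x + b • gradient h x := by
  unfold gradient
  rw [H, map_add]
  simp

lemma energy_integrable {d : ℕ} {Ω : Set (Euc d)} (hΩ : IsOpen Ω) {p : ℝ} (hp : 1 < p)
    {V : Euc d → ℝ} (hV : LocBddPotential Ω V) {f g : Euc d → ℝ}
    (hf : ContDiff ℝ 1 f) (hfc : HasCompactSupport f)
    (hg : Continuous g) (hgc : HasCompactSupport g) (hs : tsupport g ⊆ Ω) :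
    IntegrableOn (fun x => ‖gradient f x‖ ^ p) Ω ∧ IntegrableOn (fun x => V x * |g x| ^ p) Ω := by
  have hp0 : 0 < p := by linarith
  have c1 : Continuous (fun x => ‖gradient f x‖ ^ p) :=
    (continuous_gradient' hf).norm.rpow_const (fun _ => Or.inr hp0.le)
  have c2 : Continuous (fun x => |g x| ^ p) :=
    hg.abs.rpow_const (fun _ => Or.inr hp0.le)
  constructor
  · obtain ⟨C, hC⟩ := hfc.isCompact.exists_bound_of_continuousOn c1.continuousOn
    refine integrableOn_of_bdd hΩ c1.aestronglyMeasurable hfc.isCompact (C := C) ?_ ?_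
    · intro x _ hx
      simp [gradient_eq_zero_of_notMem hx, hp0.ne']
    · intro x _ hx
      exact hC x hx
  · obtain ⟨C, hC⟩ := hgc.isCompact.exists_bound_of_continuousOn c2.continuousOn
    obtain ⟨C', hC'⟩ := hV.2 _ hs hgc.isCompact
    refine integrableOn_of_bdd hΩ (hV.1.aestronglyMeasurable.fun_mul c2.aestronglyMeasurable)
      hgc.isCompact (C := |C'| * C) ?_ ?_
    · intro x _ hx
      simp [image_eq_zero_of_notMem_tsupport hx, hp0.ne']
    · intro x _ hx
      rw [abs_mul]
      exact mul_le_mul ((hC' x hx).trans (le_abs_self _)) (hC x hx) (abs_nonneg _) (abs_nonneg _)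

lemma test_C1 {d : ℕ} {Ω : Set (Euc d)} {u : Euc d → ℝ} (hu : IsTestFun Ω u) : ContDiff ℝ 1 u :=
  hu.1.of_le (by exact_mod_cast le_top)

lemma quot_C1 {d : ℕ} {Ω : Set (Euc d)} (hΩ : IsOpen Ω) {v : Euc d → ℝ}
    (hv : ContDiffOn ℝ 1 v Ω) (hvp : ∀ x ∈ Ω, 0 < v x) {u : Euc d → ℝ} (hu : IsTestFun Ω u) :
    ContDiff ℝ 1 (fun x => u x / v x) := by
  refine contDiff_of_supp hΩ hu.2.2 ?_ (fun x hx => by simp [hx])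
  exact (test_C1 hu).contDiffOn.div hv (fun x hx => (hvp x hx).ne')

lemma picone {d : ℕ} {Ω : Set (Euc d)} (hΩ : IsOpen Ω) {p : ℝ} (hp : 1 < p)
    {V : Euc d → ℝ} (hV : LocBddPotential Ω V) {v : Euc d → ℝ}
    (hv : IsPositiveSupersolution Ω V p v) {u w : Euc d → ℝ} (hu : IsTestFun Ω u)
    (hu0 : ∀ x, 0 ≤ u x) (hw : w = fun x => u x / v x) :
    ∫⁻ x in Ω, ENNReal.ofReal (Lag p (w x • gradient v x) (v x • gradient w x)) ≤
      ENNReal.ofReal (energyQ Ω V p u) := by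
  have hp0 : 0 < p := by linarith
  have hwC : ContDiff ℝ 1 w := hw ▸ quot_C1 hΩ hv.1 hv.2.1 hu
  let φ : Euc d → ℝ := fun x => v x * w x ^ p
  have hφ0 : ∀ x, u x = 0 → φ x = 0 := fun x hx => by simp [φ, hw, hx, hp0.ne']
  have hφC : ContDiff ℝ 1 φ := by
    refine contDiff_of_supp hΩ hu.2.2 ?_ hφ0
    refine hv.1.mul ?_
    have : ContDiff ℝ ((1 : ℕ) : WithTop ℕ∞) (fun x : ℝ => x ^ p) :=
      Real.contDiff_rpow_const_of_le (by simpa using hp.le)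
    exact ((this.of_le (by simp)).comp hwC).contDiffOn
  have hφs : tsupport φ ⊆ tsupport u := tsupport_sub_aux hφ0
  have hφc : HasCompactSupport φ := hu.2.1.of_isClosed_subset (isClosed_tsupport _) hφs
  have hwnn : ∀ x ∈ Ω, 0 ≤ w x := fun x hx => by
    rw [hw]; exact div_nonneg (hu0 x) (hv.2.1 x hx).le
  have hφnn : ∀ x, 0 ≤ φ x := by
    intro x
    by_cases hx : x ∈ Ω
    · exact mul_nonneg (hv.2.1 x hx).le (Real.rpow_nonneg (hwnn x hx) _)
    · rw [hφ0]
      by_contra h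
      exact hx (hu.2.2 (subset_tsupport _ h))
  have hsup := supersol_C1 hΩ hp hV hv hφC hφc (hφs.trans hu.2.2) hφnn
  have hIφ := wkInt_integrable hΩ hp hV hv.1 hφC hφc (hφs.trans hu.2.2)
  obtain ⟨hI1, hI2⟩ := energy_integrable hΩ hp hV (test_C1 hu) hu.2.1
    (test_C1 hu).continuous hu.2.1 hu.2.2
  have key : ∀ x ∈ Ω, Lag p (w x • gradient v x) (v x • gradient w x) =
      (‖gradient u x‖ ^ p + V x * |u x| ^ p) - wkInt V p v φ x := by
    intro x hx
    have hvx := hv.2.1 x hx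
    have hwx := hwnn x hx
    have dv : HasFDerivAt v (fderiv ℝ v x) x :=
      ((hv.1.contDiffAt (hΩ.mem_nhds hx)).differentiableAt one_ne_zero).hasFDerivAt
    have dw : HasFDerivAt w (fderiv ℝ w x) x :=
      (hwC.differentiable one_ne_zero x).hasFDerivAt
    have hux : u x = v x * w x := by rw [hw]; field_simp
    have g1 : gradient u x = w x • gradient v x + v x • gradient w x := by
      apply gradient_add_smul
      have he : u =ᶠ[𝓝 x] (v * w) := by
        filter_upwards [hΩ.mem_nhds hx] with y hy
        have := (hv.2.1 y hy).ne'
        simp [hw]; field_simp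
      rw [he.fderiv_eq, (dv.mul dw).fderiv, add_comm]
    have g2 : gradient φ x = (w x ^ p) • gradient v x + (v x * (p * w x ^ (p - 1))) • gradient w x := by
      apply gradient_add_smul
      have := (dv.mul (dw.rpow_const (p := p) (Or.inr hp.le))).fderiv
      have e : φ = v * (fun x => w x ^ p) := rfl
      rw [e, this, add_comm, smul_smul]
    unfold Lag wkInt
    rw [← g1, g2, inner_add_right, inner_smul_right, inner_smul_right, inner_smul_left,
      inner_smul_right]
    have n1 : ‖gradient v x‖ ^ (p - 2) * ⟪gradient v x, gradient v x⟫ = ‖gradient v x‖ ^ p := by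
      rw [real_inner_self_eq_norm_mul_norm]
      by_cases hz : ‖gradient v x‖ = 0
      · simp [hz, hp0.ne']
      · rw [← mul_assoc, ← Real.rpow_add_one hz, ← Real.rpow_add_one hz]; congr 1; ring
    have n2 : ‖w x • gradient v x‖ ^ p = w x ^ p * ‖gradient v x‖ ^ p := by
      rw [norm_smul, Real.norm_eq_abs, abs_of_nonneg hwx, Real.mul_rpow hwx (norm_nonneg _)]
    have n3 : ‖w x • gradient v x‖ ^ (p - 2) * w x = w x ^ (p - 1) * ‖gradient v x‖ ^ (p - 2) := by
      rw [norm_smul, Real.norm_eq_abs, abs_of_nonneg hwx, Real.mul_rpow hwx (norm_nonneg _)]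
      by_cases hz : w x = 0
      · simp [hz, (by linarith : p - 1 ≠ 0)]
      · have : w x ^ (p - 1) = w x ^ (p - 2) * w x := by
          rw [← Real.rpow_add_one hz]; congr 1; ring
        rw [this]; ring
    have n4 : |u x| ^ p = v x ^ (p - 1) * (v x * w x ^ p) := by
      rw [abs_of_nonneg (hu0 x), hux, Real.mul_rpow hvx.le hwx]
      have : v x ^ p = v x ^ (p - 1) * v x := by
        rw [← Real.rpow_add_one hvx.ne']; congr 1; ring
      rw [this]; ring
    rw [n2, n4]
    simp only [φ, conj_trivial]
    linear_combination (w x ^ p) * n1 - p * v x * ⟪gradient v x, gradient w x⟫ * n3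
  have hnn : 0 ≤ᵐ[volume.restrict Ω]
      fun x => Lag p (w x • gradient v x) (v x • gradient w x) :=
    Eventually.of_forall fun x => Lag_nonneg hp _ _
  have hIntg : IntegrableOn (fun x => Lag p (w x • gradient v x) (v x • gradient w x)) Ω :=
    ((hI1.add hI2).sub hIφ).congr_fun (fun x hx => (key x hx).symm) hΩ.measurableSet
  rw [← ofReal_integral_eq_lintegral_ofReal hIntg hnn]
  apply ENNReal.ofReal_le_ofReal
  have hI3 : IntegrableOn (fun x => ‖gradient u x‖ ^ p + V x * |u x| ^ p) Ω := hI1.add hI2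
  rw [setIntegral_congr_fun hΩ.measurableSet key, integral_sub hI3 hIφ]
  unfold energyQ
  linarith
end
end

section
open MeasureTheory Filter
open scoped RealInnerProductSpace Topology ENNReal
noncomputable section

lemma lintegral_comp_affine {d : ℕ} {g : Euc d → ℝ≥0∞} (hg : Measurable g) {t : ℝ}
    (ht : 1 / 2 ≤ t) (c : Euc d) : ∫⁻ y, g (c + t • y) ≤ 2 ^ d * ∫⁻ y, g y := by
  have ht0 : 0 < t := by linarith
  have e1 : ∫⁻ y, g (c + t • y) = ∫⁻ z, g (c + z) ∂(Measure.map (fun y : Euc d => t • y) volume) := by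
    rw [lintegral_map (by fun_prop) (by fun_prop)]
  rw [e1, Measure.map_addHaar_smul _ ht0.ne', lintegral_smul_measure,
    lintegral_add_left_eq_self (fun z => g z) c, smul_eq_mul]
  gcongr
  have : |(t ^ Module.finrank ℝ (Euc d))⁻¹| ≤ 2 ^ d := by
    rw [finrank_euclideanSpace_fin, abs_of_nonneg (by positivity), ← inv_pow]
    gcongr
    rw [inv_le_comm₀ ht0 two_pos]; linarith
  calc _ ≤ ENNReal.ofReal (2 ^ d) := ENNReal.ofReal_le_ofReal this
    _ = _ := by rw [ENNReal.ofReal_pow (by norm_num)]; simp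

lemma jensen_lintegral {α : Type*} [MeasurableSpace α] {μ : Measure α} [IsProbabilityMeasure μ]
    {f : α → ℝ} (hf : AEStronglyMeasurable f μ) {p : ℝ} (hp : 1 < p) :
    (∫⁻ t, ‖f t‖ₑ ∂μ) ^ p ≤ ∫⁻ t, ‖f t‖ₑ ^ p ∂μ := by
  have h := eLpNorm'_le_eLpNorm'_of_exponent_le (μ := μ) (f := f) one_pos hp.le hf
  unfold eLpNorm' at h
  simp only [ENNReal.rpow_one, div_one] at h
  have := ENNReal.rpow_le_rpow h (by linarith : 0 ≤ p)
  rwa [← ENNReal.rpow_mul, one_div, inv_mul_cancel₀ (by linarith), ENNReal.rpow_one] at this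

instance : IsProbabilityMeasure ((volume : Measure ℝ).restrict (Set.Ioc 0 1)) := ⟨by simp⟩

lemma pointwise_ftc {d : ℕ} {f : Euc d → ℝ} (hf : ContDiff ℝ 1 f) {p : ℝ} (hp : 1 < p)
    (x y : Euc d) : ‖f x - f y‖ₑ ^ p ≤ ‖x - y‖ₑ ^ p *
      ∫⁻ t in Set.Ioc (0 : ℝ) 1, ‖fderiv ℝ f (x + t • (y - x))‖ₑ ^ p := by
  have hp0 : 0 ≤ p := by linarith
  have hcf := hf.continuous_fderiv one_ne_zero
  have hc : Continuous (fun t : ℝ => fderiv ℝ f (x + t • (y - x)) (y - x)) := by fun_prop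
  have hIntg : f y - f x = ∫ t in (0:ℝ)..1, fderiv ℝ f (x + t • (y - x)) (y - x) := by
    rw [intervalIntegral.integral_eq_sub_of_hasDerivAt (f := fun t : ℝ => f (x + t • (y - x)))]
    · simp
    · intro t _
      have h1 : HasDerivAt (fun t : ℝ => x + t • (y - x)) (y - x) t := by
        simpa using ((hasDerivAt_id t).smul_const (y - x)).const_add x
      exact ((hf.differentiable one_ne_zero _).hasFDerivAt).comp_hasDerivAt t h1
    · exact hc.intervalIntegrable _ _
  rw [intervalIntegral.integral_of_le zero_le_one] at hIntg
  have h1 : ‖f x - f y‖ₑ ≤ ∫⁻ t in Set.Ioc (0 : ℝ) 1, ‖fderiv ℝ f (x + t • (y - x)) (y - x)‖ₑ := by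
    rw [enorm_sub_rev, hIntg]
    exact enorm_integral_le_lintegral_enorm _
  calc ‖f x - f y‖ₑ ^ p ≤ (∫⁻ t in Set.Ioc (0 : ℝ) 1, ‖fderiv ℝ f (x + t • (y - x)) (y - x)‖ₑ) ^ p :=
        ENNReal.rpow_le_rpow h1 hp0
    _ ≤ ∫⁻ t in Set.Ioc (0 : ℝ) 1, ‖fderiv ℝ f (x + t • (y - x)) (y - x)‖ₑ ^ p :=
        jensen_lintegral hc.aestronglyMeasurable hp
    _ ≤ ∫⁻ t in Set.Ioc (0 : ℝ) 1, ‖x - y‖ₑ ^ p * ‖fderiv ℝ f (x + t • (y - x))‖ₑ ^ p := by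
        apply lintegral_mono
        intro t
        simp only
        rw [← ENNReal.mul_rpow_of_nonneg _ _ hp0, mul_comm, enorm_sub_rev x y]
        exact ENNReal.rpow_le_rpow (ContinuousLinearMap.le_opENorm _ _) hp0
    _ = _ := by
        rw [lintegral_const_mul]
        have : Continuous (fun t : ℝ => fderiv ℝ f (x + t • (y - x))) := by fun_prop
        exact this.measurable.enorm.pow_const p

lemma half_bound {d : ℕ} {g : Euc d → ℝ≥0∞} (hg : Measurable g) {G : Set (Euc d)}
    (hG : MeasurableSet G) (hconv : Convex ℝ G) {t : ℝ} (ht : 1 / 2 ≤ t) (ht1 : t ≤ 1)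
    {x : Euc d} (hx : x ∈ G) :
    ∫⁻ y in G, g ((1 - t) • x + t • y) ≤ 2 ^ d * ∫⁻ y in G, g y := by
  calc ∫⁻ y in G, g ((1 - t) • x + t • y) ≤ ∫⁻ y in G, G.indicator g ((1 - t) • x + t • y) := by
        apply setLIntegral_mono' hG
        intro y hy
        have : (1 - t) • x + t • y ∈ G :=
          hconv hx hy (by linarith) (by linarith) (by ring)
        simp [this]
    _ ≤ ∫⁻ y, G.indicator g ((1 - t) • x + t • y) := setLIntegral_le_lintegral _ _
    _ ≤ 2 ^ d * ∫⁻ y, G.indicator g y := lintegral_comp_affine (hg.indicator hG) ht _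
    _ = _ := by rw [lintegral_indicator hG]

lemma poincare {d : ℕ} {f : Euc d → ℝ} (hf : ContDiff ℝ 1 f) {p : ℝ} (hp : 1 < p)
    {G : Set (Euc d)} (hG : MeasurableSet G) (hconv : Convex ℝ G) {R : ℝ≥0∞}
    (hR : ∀ x ∈ G, ∀ y ∈ G, ‖x - y‖ₑ ≤ R) :
    ∫⁻ x in G, ∫⁻ y in G, ‖f x - f y‖ₑ ^ p ≤
      (R ^ p * (2 ^ d * volume G)) * ∫⁻ x in G, ‖fderiv ℝ f x‖ₑ ^ p := by
  have hp0 : 0 ≤ p := by linarith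
  have hcf := hf.continuous_fderiv one_ne_zero
  let g : Euc d → ℝ≥0∞ := fun x => ‖fderiv ℝ f x‖ₑ ^ p
  have hg : Measurable g := hcf.measurable.enorm.pow_const p
  let E := ∫⁻ x in G, g x
  let ν := (volume : Measure ℝ).restrict (Set.Ioc 0 1)
  let μ := (volume : Measure (Euc d)).restrict G
  have hJ : ∀ t ∈ Set.Ioc (0:ℝ) 1, ∫⁻ x, ∫⁻ y, g (x + t • (y - x)) ∂μ ∂μ ≤ 2 ^ d * volume G * E := by
    intro t ht
    have hconst : ∫⁻ _ in G, 2 ^ d * E = 2 ^ d * volume G * E := by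
      rw [setLIntegral_const]; ring
    have hrw : ∀ x y : Euc d, x + t • (y - x) = (1 - t) • x + t • y := by
      intro x y; module
    rcases le_total (1 / 2) t with h | h
    · rw [← hconst]
      apply setLIntegral_mono' hG
      intro x hx
      simp_rw [hrw]
      exact half_bound hg hG hconv h ht.2 hx
    · rw [lintegral_lintegral_swap, ← hconst]
      · apply setLIntegral_mono' hG
        intro y hy
        have hrw' : ∀ x y : Euc d, x + t • (y - x) = (1 - (1 - t)) • y + (1 - t) • x := by
          intro x y; module
        simp_rw [hrw']
        exact half_bound hg hG hconv (by linarith) (by linarith [ht.1]) hy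
      · exact (hg.comp (by fun_prop : Measurable
          (fun z : Euc d × Euc d => z.1 + t • (z.2 - z.1)))).aemeasurable
  have hm3 : Measurable (fun z : (Euc d × ℝ) × Euc d => g (z.1.1 + z.1.2 • (z.2 - z.1.1))) :=
    hg.comp (by fun_prop)
  calc ∫⁻ x in G, ∫⁻ y in G, ‖f x - f y‖ₑ ^ p
      ≤ ∫⁻ x in G, ∫⁻ y in G, R ^ p * ∫⁻ t, g (x + t • (y - x)) ∂ν := by
        apply setLIntegral_mono' hG
        intro x hx
        apply setLIntegral_mono' hG
        intro y hy
        refine (pointwise_ftc hf hp x y).trans ?_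
        gcongr
        · exact hR x hx y hy
    _ ≤ ∫⁻ x in G, R ^ p * ∫⁻ y in G, ∫⁻ t, g (x + t • (y - x)) ∂ν := by
        apply setLIntegral_mono' hG
        intro x hx
        rw [lintegral_const_mul]
        exact Measurable.lintegral_prod_right'
          (f := fun z : Euc d × ℝ => g (x + z.2 • (z.1 - x))) (hg.comp (by fun_prop))
    _ = R ^ p * ∫⁻ x, ∫⁻ y, ∫⁻ t, g (x + t • (y - x)) ∂ν ∂μ ∂μ := by
        rw [lintegral_const_mul]
        refine Measurable.lintegral_prod_right'
          (f := fun z : Euc d × Euc d => ∫⁻ t, g (z.1 + t • (z.2 - z.1)) ∂ν) ?_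
        exact Measurable.lintegral_prod_right'
          (f := fun z : (Euc d × Euc d) × ℝ => g (z.1.1 + z.2 • (z.1.2 - z.1.1)))
          (hg.comp (by fun_prop))
    _ = R ^ p * ∫⁻ x, ∫⁻ t, ∫⁻ y, g (x + t • (y - x)) ∂μ ∂ν ∂μ := by
        congr 1
        apply lintegral_congr
        intro x
        rw [lintegral_lintegral_swap]
        exact (hg.comp (by fun_prop : Measurable
          (fun z : Euc d × ℝ => x + z.2 • (z.1 - x)))).aemeasurable
    _ = R ^ p * ∫⁻ t, ∫⁻ x, ∫⁻ y, g (x + t • (y - x)) ∂μ ∂μ ∂ν := by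
        congr 1
        rw [lintegral_lintegral_swap]
        exact (Measurable.lintegral_prod_right' hm3).aemeasurable
    _ ≤ R ^ p * ∫⁻ t, 2 ^ d * volume G * E ∂ν := by
        gcongr 1
        exact setLIntegral_mono' measurableSet_Ioc hJ
    _ = _ := by
        rw [lintegral_const, measure_univ, mul_one, ← mul_assoc]
end
end

section
open MeasureTheory Filter
open scoped RealInnerProductSpace Topology ENNReal
noncomputable section

lemma transfer {d : ℕ} {f : Euc d → ℝ} (hf : Continuous f) {p : ℝ} (hp : 1 < p)
    {A G : Set (Euc d)} (hAG : A ⊆ G) (c : ℝ) :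
    volume A * ∫⁻ x in G, ‖f x - c‖ₑ ^ p ≤ 2 ^ (p - 1) *
      ((∫⁻ x in G, ∫⁻ y in G, ‖f x - f y‖ₑ ^ p) + volume G * ∫⁻ y in A, ‖f y - c‖ₑ ^ p) := by
  have m1 : Measurable (fun x => ‖f x - c‖ₑ ^ p) := by fun_prop
  have m2 : Measurable (fun z : Euc d × Euc d => ‖f z.1 - f z.2‖ₑ ^ p) := by
    have : Continuous (fun z : Euc d × Euc d => f z.1 - f z.2) := by fun_prop
    exact this.measurable.enorm.pow_const p
  calc volume A * ∫⁻ x in G, ‖f x - c‖ₑ ^ p = ∫⁻ x in G, ∫⁻ y in A, ‖f x - c‖ₑ ^ p := by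
        simp_rw [setLIntegral_const]
        rw [lintegral_mul_const _ m1, mul_comm]
    _ ≤ ∫⁻ x in G, ∫⁻ y in A, 2 ^ (p - 1) * (‖f x - f y‖ₑ ^ p + ‖f y - c‖ₑ ^ p) := by
        apply lintegral_mono
        intro x
        apply lintegral_mono
        intro y
        simp only
        have h1 : ‖f x - c‖ₑ ≤ ‖f x - f y‖ₑ + ‖f y - c‖ₑ := by
          have := enorm_add_le (f x - f y) (f y - c)
          simpa using this
        exact (ENNReal.rpow_le_rpow h1 (by linarith)).trans
          (ENNReal.rpow_add_le_mul_rpow_add_rpow _ _ hp.le)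
    _ = ∫⁻ x in G, 2 ^ (p - 1) * ((∫⁻ y in A, ‖f x - f y‖ₑ ^ p) + ∫⁻ y in A, ‖f y - c‖ₑ ^ p) := by
        apply lintegral_congr
        intro x
        rw [lintegral_const_mul _ (by fun_prop), lintegral_add_left (by fun_prop)]
    _ = 2 ^ (p - 1) * ((∫⁻ x in G, ∫⁻ y in A, ‖f x - f y‖ₑ ^ p) + volume G * ∫⁻ y in A, ‖f y - c‖ₑ ^ p) := by
        have m3 : Measurable (fun x => ∫⁻ y in A, ‖f x - f y‖ₑ ^ p) :=
          Measurable.lintegral_prod_right' m2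
        rw [lintegral_const_mul _ (m3.add_const _), lintegral_add_left m3, setLIntegral_const]
        ring
    _ ≤ _ := by
        gcongr 2
        exact lintegral_mono fun x => lintegral_mono_set hAG

lemma ennreal_absorb {E x : ℝ≥0∞} (hE : E ≠ ⊤) (h : E ≤ 2⁻¹ * E + x) : E ≤ 2 * x := by
  by_cases hx : x = ⊤
  · subst hx; simp
  lift E to NNReal using hE
  lift x to NNReal using hx
  have h2 : (2⁻¹ : ℝ≥0∞) = ((2⁻¹ : NNReal) : ℝ≥0∞) := by
    rw [ENNReal.coe_inv two_ne_zero]; rfl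
  rw [h2] at h
  norm_cast at h ⊢
  rw [← NNReal.coe_le_coe] at h ⊢
  push_cast at h ⊢
  linarith

lemma absorb_seq {E N ε : ℕ → ℝ≥0∞} {K1 S : ℝ≥0∞} (hK1 : K1 ≠ ⊤) (hS : S ≠ ⊤)
    (hE : ∀ k, E k ≠ ⊤) (hε : Tendsto ε atTop (𝓝 0))
    (hδ : ∀ δ : ℝ≥0∞, δ ≠ 0 → ∃ C : ℝ≥0∞, C ≠ ⊤ ∧ ∀ k, E k ≤ δ * N k + C * ε k)
    (hN : ∀ᶠ k in atTop, N k ≤ K1 * (E k + S)) :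
    (∃ S' : ℝ≥0∞, S' ≠ ⊤ ∧ ∀ᶠ k in atTop, N k ≤ S') ∧ Tendsto E atTop (𝓝 0) := by
  have hT : Tendsto E atTop (𝓝 0) := by
    rw [ENNReal.tendsto_nhds_zero]
    intro e he
    have he4 : e / 4 ≠ 0 := by
      simp [ENNReal.div_eq_zero_iff, he.ne']
    obtain ⟨n, hn, hnS⟩ := ENNReal.exists_nnreal_pos_mul_lt hS he4
    let η : ℝ≥0∞ := min n 2⁻¹
    have hη0 : η ≠ 0 := by
      simp only [η, ne_eq, min_eq_bot, ← bot_eq_zero] 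
      simp [hn.ne']
    have hδ0 : η / (K1 + 1) ≠ 0 := by
      simp [ENNReal.div_eq_zero_iff, hη0, hK1]
    obtain ⟨C, hC, hCE⟩ := hδ _ hδ0
    have hCε : Tendsto (fun k => C * ε k) atTop (𝓝 0) := by
      simpa using ENNReal.Tendsto.const_mul hε (Or.inr hC)
    filter_upwards [hN, ENNReal.tendsto_nhds_zero.1 hCε _ (pos_iff_ne_zero.2 he4)] with k h1 h2
    have hle : η / (K1 + 1) * K1 ≤ η := by
      calc η / (K1 + 1) * K1 ≤ η / (K1 + 1) * (K1 + 1) := by gcongr; exact le_self_add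
        _ = η := ENNReal.div_mul_cancel (by simp) (by simp [hK1])
    have h3 : E k ≤ 2⁻¹ * E k + (e / 4 + e / 4) := by
      calc E k ≤ η / (K1 + 1) * N k + C * ε k := hCE k
        _ ≤ η / (K1 + 1) * (K1 * (E k + S)) + e / 4 := by gcongr
        _ = (η / (K1 + 1) * K1) * (E k + S) + e / 4 := by ring
        _ ≤ η * (E k + S) + e / 4 := by gcongr
        _ = η * E k + (η * S + e / 4) := by ring
        _ ≤ 2⁻¹ * E k + (n * S + e / 4) := by
          gcongr
          · exact min_le_right _ _
          · exact min_le_left _ _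
        _ ≤ _ := by gcongr
    refine (ennreal_absorb (hE k) h3).trans ?_
    have : 2 * (e / 4 + e / 4) = e := by
      have : 2 * (e / 4 + e / 4) = 4 * (e / 4) := by ring
      rw [this, ENNReal.mul_div_cancel (by norm_num) (by norm_num)]
    exact this.le
  refine ⟨⟨K1 * (1 + S), ENNReal.mul_ne_top hK1 (by simp [hS]), ?_⟩, hT⟩
  filter_upwards [hN, ENNReal.tendsto_nhds_zero.1 hT 1 one_pos] with k h1 h2
  exact h1.trans (by gcongr)

lemma chain {d : ℕ} {Ω : Set (Euc d)} (hΩ : IsOpen Ω) (hc : IsPreconnected Ω)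
    (P : Set (Euc d) → Prop) (hmono : ∀ s t, s ⊆ t → P t → P s)
    (hprop : ∀ x r, 0 < r → Metric.closedBall x r ⊆ Ω → ∀ A, IsOpen A → A.Nonempty →
      A ⊆ Metric.ball x r → P A → P (Metric.ball x r))
    {A₀ : Set (Euc d)} (hA : IsOpen A₀) (hAne : A₀.Nonempty) (hAΩ : A₀ ⊆ Ω) (hPA : P A₀) :
    ∀ x r, 0 < r → Metric.closedBall x r ⊆ Ω → P (Metric.ball x r) := by
  let S : Set (Euc d) := {x | ∃ r > 0, P (Metric.ball x r)}
  have hSo : IsOpen S := by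
    rw [Metric.isOpen_iff]
    rintro x ⟨r, hr, hP⟩
    refine ⟨r, hr, fun y hy => ⟨r - dist y x, by simpa using hy, hmono _ _ ?_ hP⟩⟩
    exact Metric.ball_subset_ball' (by linarith)
  have hsub : Ω ⊆ S := by
    refine hc.subset_of_closure_inter_subset hSo ?_ ?_
    · obtain ⟨x, hx⟩ := hAne
      obtain ⟨r, hr, hrA⟩ := Metric.isOpen_iff.1 hA x hx
      exact ⟨x, hAΩ hx, r, hr, hmono _ _ hrA hPA⟩
    · rintro x ⟨hxS, hxΩ⟩
      obtain ⟨r, hr, hrΩ⟩ := Metric.nhds_basis_closedBall.mem_iff.1 (hΩ.mem_nhds hxΩ)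
      obtain ⟨y, ⟨r', hr', hy'⟩, hyx⟩ := Metric.mem_closure_iff.1 hxS r hr
      refine ⟨r, hr, hprop x r hr hrΩ (Metric.ball y r' ∩ Metric.ball x r)
        (Metric.isOpen_ball.inter Metric.isOpen_ball)
        ⟨y, Metric.mem_ball_self hr', by rw [Metric.mem_ball, dist_comm]; exact hyx⟩
        Set.inter_subset_right (hmono _ _ Set.inter_subset_left hy')⟩
  intro x r hr hrΩ
  obtain ⟨r', hr', hP⟩ := hsub (hrΩ (Metric.mem_closedBall_self hr.le))
  exact hprop x r hr hrΩ (Metric.ball x r' ∩ Metric.ball x r)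
    (Metric.isOpen_ball.inter Metric.isOpen_ball)
    ⟨x, Metric.mem_ball_self hr', Metric.mem_ball_self hr⟩
    Set.inter_subset_right (hmono _ _ Set.inter_subset_left hP)
end
end

section
open MeasureTheory Filter
open scoped RealInnerProductSpace Topology ENNReal
noncomputable section

lemma enorm_rpow_ofReal {E : Type*} [SeminormedAddCommGroup E] (x : E) {p : ℝ} (hp : 0 ≤ p) :
    ‖x‖ₑ ^ p = ENNReal.ofReal (‖x‖ ^ p) := by
  rw [← ofReal_norm, ENNReal.ofReal_rpow_of_nonneg (norm_nonneg _) hp]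

lemma lintegral_cpt_ne_top {d : ℕ} {K G : Set (Euc d)} (hK : IsCompact K) (hG : G ⊆ K)
    {E : Type*} [SeminormedAddCommGroup E] {f : Euc d → E} (hf : ContinuousOn f K) {p : ℝ}
    (hp : 0 ≤ p) : ∫⁻ x in G, ‖f x‖ₑ ^ p ≠ ⊤ := by
  obtain ⟨C, hC⟩ := hK.exists_bound_of_continuousOn hf
  have h1 : ∫⁻ x in K, ‖f x‖ₑ ^ p ≤ ∫⁻ _ in K, ENNReal.ofReal C ^ p := by
    apply setLIntegral_mono' hK.measurableSet
    intro x hx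
    gcongr
    rw [← ofReal_norm]
    exact ENNReal.ofReal_le_ofReal (hC x hx)
  refine ((lintegral_mono_set hG).trans h1).trans_lt ?_ |>.ne
  rw [setLIntegral_const]
  exact ENNReal.mul_lt_top (ENNReal.rpow_lt_top_of_nonneg hp ENNReal.ofReal_ne_top)
    hK.measure_lt_top

lemma local_energy {d : ℕ} {Ω : Set (Euc d)} (hΩ : IsOpen Ω) {p : ℝ} (hp : 1 < p)
    {V : Euc d → ℝ} (hV : LocBddPotential Ω V) {v : Euc d → ℝ}
    (hv : IsPositiveSupersolution Ω V p v) {u : ℕ → Euc d → ℝ} (hu : ∀ k, IsTestFun Ω (u k))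
    (hu0 : ∀ k x, 0 ≤ u k x) {K G : Set (Euc d)} (hK : IsCompact K) (hKΩ : K ⊆ Ω)
    (hGK : G ⊆ K) (hG : MeasurableSet G) {δ : ℝ≥0∞} (hδ : δ ≠ 0) :
    ∃ C : ℝ≥0∞, C ≠ ⊤ ∧ ∀ k, ∫⁻ x in G, ‖fderiv ℝ (fun x => u k x / v x) x‖ₑ ^ p ≤
      δ * (∫⁻ x in G, ‖u k x / v x‖ₑ ^ p) + C * ENNReal.ofReal (energyQ Ω V p (u k)) := by
  have hp0 : 0 < p := by linarith
  -- a real δ' ≤ δ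
  obtain ⟨δ', hδ'0, hδ'⟩ : ∃ δ' : ℝ, 0 < δ' ∧ ENNReal.ofReal δ' ≤ δ := by
    obtain ⟨n, hn, hnS⟩ := ENNReal.exists_nnreal_pos_mul_lt (a := 1) (by simp) hδ
    refine ⟨n, by exact_mod_cast hn, ?_⟩
    rw [ENNReal.ofReal_coe_nnreal]; simpa using hnS.le
  obtain ⟨m, hm, hmv⟩ : ∃ m : ℝ, 0 < m ∧ ∀ x ∈ K, m ≤ v x := by
    rcases K.eq_empty_or_nonempty with h | h
    · exact ⟨1, one_pos, by simp [h]⟩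
    · obtain ⟨x, hx, hmin⟩ := hK.exists_isMinOn h (hv.1.continuousOn.mono hKΩ)
      exact ⟨_, hv.2.1 x (hKΩ hx), fun y hy => hmin hy⟩
  obtain ⟨M, hM⟩ := hK.exists_bound_of_continuousOn ((continuousOn_gradient hΩ hv.1).mono hKΩ)
  let M' := |M| + 1
  have hM' : 0 < M' := by positivity
  obtain ⟨C, hC0, hC⟩ := Lag_coercive (E := Euc d) hp
    (δ := δ' * m ^ p / M' ^ p) (by positivity)
  refine ⟨ENNReal.ofReal (C / m ^ p), ENNReal.ofReal_ne_top, fun k => ?_⟩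
  set w : Euc d → ℝ := fun x => u k x / v x with hw
  have hwC : ContDiff ℝ 1 w := quot_C1 hΩ hv.1 hv.2.1 (hu k)
  have hpt : ∀ x ∈ G, ‖fderiv ℝ w x‖ₑ ^ p ≤ δ * ‖w x‖ₑ ^ p + ENNReal.ofReal (C / m ^ p) *
      ENNReal.ofReal (Lag p (w x • gradient v x) (v x • gradient w x)) := by
    intro x hx
    have hL := Lag_nonneg hp (w x • gradient v x) (v x • gradient w x)
    have h := hC (w x • gradient v x) (v x • gradient w x)
    have hvx := hv.2.1 x (hKΩ (hGK hx))
    rw [norm_smul, norm_smul, Real.mul_rpow (norm_nonneg _) (norm_nonneg _),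
      Real.mul_rpow (norm_nonneg _) (norm_nonneg _), Real.norm_eq_abs (v x), abs_of_pos hvx,
      norm_gradient_eq w] at h
    have h1 : m ^ p ≤ v x ^ p := Real.rpow_le_rpow hm.le (hmv x (hGK hx)) hp0.le
    have h2 : ‖gradient v x‖ ^ p ≤ M' ^ p := by
      refine Real.rpow_le_rpow (norm_nonneg _) ?_ hp0.le
      have := hM x (hGK hx)
      simp only [M']
      linarith [le_abs_self M]
    have hreal : ‖fderiv ℝ w x‖ ^ p ≤ δ' * ‖w x‖ ^ p +
        (C / m ^ p) * Lag p (w x • gradient v x) (v x • gradient w x) := by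
      have hmp : 0 < m ^ p := by positivity
      have hMp : 0 < M' ^ p := by positivity
      have a1 : m ^ p * ‖fderiv ℝ w x‖ ^ p ≤ v x ^ p * ‖fderiv ℝ w x‖ ^ p := by gcongr
      have a2 : δ' * m ^ p / M' ^ p * (‖w x‖ ^ p * ‖gradient v x‖ ^ p) ≤
          δ' * m ^ p / M' ^ p * (‖w x‖ ^ p * M' ^ p) := by gcongr
      have a3 : δ' * m ^ p / M' ^ p * (‖w x‖ ^ p * M' ^ p) = m ^ p * (δ' * ‖w x‖ ^ p) := by
        field_simp
      have a4 : m ^ p * (C / m ^ p * Lag p (w x • gradient v x) (v x • gradient w x)) =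
          C * Lag p (w x • gradient v x) (v x • gradient w x) := by field_simp
      refine le_of_mul_le_mul_left ?_ hmp
      rw [mul_add, a4]
      linarith
    rw [enorm_rpow_ofReal _ hp0.le, enorm_rpow_ofReal _ hp0.le]
    calc _ ≤ ENNReal.ofReal _ := ENNReal.ofReal_le_ofReal hreal
      _ = ENNReal.ofReal δ' * ENNReal.ofReal (‖w x‖ ^ p) + _ := by
        rw [ENNReal.ofReal_add (by positivity) (by positivity), ENNReal.ofReal_mul hδ'0.le,
          ENNReal.ofReal_mul (by positivity)]
      _ ≤ _ := by gcongr
  calc _ ≤ ∫⁻ x in G, (δ * ‖w x‖ₑ ^ p + ENNReal.ofReal (C / m ^ p) *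
      ENNReal.ofReal (Lag p (w x • gradient v x) (v x • gradient w x))) :=
        setLIntegral_mono' hG hpt
    _ = δ * (∫⁻ x in G, ‖w x‖ₑ ^ p) + ENNReal.ofReal (C / m ^ p) *
      ∫⁻ x in G, ENNReal.ofReal (Lag p (w x • gradient v x) (v x • gradient w x)) := by
        have mw : Measurable (fun x => ‖w x‖ₑ ^ p) :=
          hwC.continuous.measurable.enorm.pow_const p
        rw [lintegral_add_left (mw.const_mul _), lintegral_const_mul _ mw,
          lintegral_const_mul' _ _ ENNReal.ofReal_ne_top]
    _ ≤ _ := by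
        gcongr
        exact (lintegral_mono_set (hGK.trans hKΩ)).trans (picone hΩ hp hV hv (hu k) (hu0 k) hw)

lemma core {d : ℕ} {Ω : Set (Euc d)} (hΩ : IsOpen Ω) (hΩc : IsPreconnected Ω) {p : ℝ} (hp : 1 < p)
    {V : Euc d → ℝ} (hV : LocBddPotential Ω V) {v : Euc d → ℝ}
    (hv : IsPositiveSupersolution Ω V p v) {u : ℕ → Euc d → ℝ} (hu : ∀ k, IsTestFun Ω (u k))
    (hu0 : ∀ k x, 0 ≤ u k x) {A₀ : Set (Euc d)} (hA : IsOpen A₀) (hAne : A₀.Nonempty)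
    (hAΩ : A₀ ⊆ Ω)
    (hbd : ∃ S : ℝ≥0∞, S ≠ ⊤ ∧ ∀ᶠ k in atTop, ∫⁻ x in A₀, ‖u k x / v x‖ₑ ^ p ≤ S)
    (hQ : Tendsto (fun k => energyQ Ω V p (u k)) atTop (𝓝 0)) :
    ∃ c : ℕ → ℝ, (∀ k, 0 ≤ c k) ∧ ∀ K, IsCompact K → K ⊆ Ω →
      Tendsto (fun k => ∫⁻ x in K, ‖u k x / v x - c k‖ₑ ^ p) atTop (𝓝 0) := by
  have hp0 : 0 < p := by linarith
  let w : ℕ → Euc d → ℝ := fun k x => u k x / v x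
  have hwC : ∀ k, ContDiff ℝ 1 (w k) := fun k => quot_C1 hΩ hv.1 hv.2.1 (hu k)
  have hε : Tendsto (fun k => ENNReal.ofReal (energyQ Ω V p (u k))) atTop (𝓝 0) := by
    simpa using ENNReal.tendsto_ofReal hQ
  -- Poincare constants
  have hdiam : ∀ (x : Euc d) (r : ℝ), 0 < r → ∀ y ∈ Metric.ball x r, ∀ z ∈ Metric.ball x r,
      ‖y - z‖ₑ ≤ ENNReal.ofReal (2 * r) := by
    intro x r hr y hy z hz
    rw [← ofReal_norm, ← dist_eq_norm]
    apply ENNReal.ofReal_le_ofReal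
    have := dist_triangle_right y z x
    rw [Metric.mem_ball] at hy hz
    linarith
  have hpoinc : ∀ (x : Euc d) (r : ℝ), 0 < r → ∃ P : ℝ≥0∞, P ≠ ⊤ ∧ ∀ k,
      ∫⁻ y in Metric.ball x r, ∫⁻ z in Metric.ball x r, ‖w k y - w k z‖ₑ ^ p ≤
        P * ∫⁻ y in Metric.ball x r, ‖fderiv ℝ (w k) y‖ₑ ^ p := by
    intro x r hr
    refine ⟨_, ?_, fun k => poincare (hwC k) hp measurableSet_ball (convex_ball x r)
      (hdiam x r hr)⟩
    refine ENNReal.mul_ne_top (ENNReal.rpow_ne_top_of_nonneg hp0.le ENNReal.ofReal_ne_top)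
      (ENNReal.mul_ne_top (by simp) measure_ball_lt_top.ne)
  have hstep : ∀ x r, 0 < r → Metric.closedBall x r ⊆ Ω → ∀ A, IsOpen A → A.Nonempty →
      A ⊆ Metric.ball x r →
      (∃ S : ℝ≥0∞, S ≠ ⊤ ∧ ∀ᶠ k in atTop, ∫⁻ y in A, ‖w k y‖ₑ ^ p ≤ S) →
      (∃ S : ℝ≥0∞, S ≠ ⊤ ∧ ∀ᶠ k in atTop, ∫⁻ y in Metric.ball x r, ‖w k y‖ₑ ^ p ≤ S) ∧
      Tendsto (fun k => ∫⁻ y in Metric.ball x r, ‖fderiv ℝ (w k) y‖ₑ ^ p) atTop (𝓝 0) := by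
    rintro x r hr hrΩ A hAo hAne hAG ⟨S, hS, hSk⟩
    obtain ⟨P, hP, hPk⟩ := hpoinc x r hr
    have hvA : volume A ≠ 0 := (hAo.measure_pos volume hAne).ne'
    have hvA' : volume A ≠ ⊤ := ((measure_mono hAG).trans_lt measure_ball_lt_top).ne
    have hvG : volume (Metric.ball x r) ≠ ⊤ := measure_ball_lt_top.ne
    have h2p : (2 : ℝ≥0∞) ^ (p - 1) ≠ ⊤ :=
      ENNReal.rpow_ne_top_of_nonneg (by linarith) (by simp)
    refine absorb_seq (K1 := (volume A)⁻¹ * (2 ^ (p - 1) * (P + volume (Metric.ball x r))))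
      (S := S) (ε := fun k => ENNReal.ofReal (energyQ Ω V p (u k))) ?_ hS ?_ hε ?_ ?_
    · refine ENNReal.mul_ne_top (by simp [hvA]) (ENNReal.mul_ne_top h2p ?_)
      simp [hP, hvG]
    · intro k
      exact lintegral_cpt_ne_top (isCompact_closedBall x r) Metric.ball_subset_closedBall
        ((hwC k).continuous_fderiv one_ne_zero).continuousOn hp0.le
    · intro δ hδ
      exact local_energy hΩ hp hV hv hu hu0 (isCompact_closedBall x r) hrΩ
        Metric.ball_subset_closedBall measurableSet_ball hδ
    · filter_upwards [hSk] with k hk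
      have ht := transfer (hwC k).continuous hp hAG 0
      simp only [sub_zero] at ht
      rw [mul_assoc, ← ENNReal.mul_le_iff_le_inv hvA hvA']
      refine ht.trans ?_
      rw [mul_assoc]
      gcongr
      calc _ ≤ P * (∫⁻ y in Metric.ball x r, ‖fderiv ℝ (w k) y‖ₑ ^ p) +
            volume (Metric.ball x r) * S := by gcongr; exact hPk k
        _ ≤ (P + volume (Metric.ball x r)) * (∫⁻ y in Metric.ball x r, ‖fderiv ℝ (w k) y‖ₑ ^ p) +
            (P + volume (Metric.ball x r)) * S := by
            gcongr
            · exact le_self_add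
            · exact le_add_self
        _ = _ := by ring
  have hbdd := chain hΩ hΩc
    (fun A => ∃ S : ℝ≥0∞, S ≠ ⊤ ∧ ∀ᶠ k in atTop, ∫⁻ y in A, ‖w k y‖ₑ ^ p ≤ S)
    (by
      rintro s t hst ⟨S, hS, h⟩
      refine ⟨S, hS, ?_⟩
      filter_upwards [h] with k hk
      exact (lintegral_mono_set hst).trans hk)
    (fun x r hr hrΩ A hA hAne hAG h => (hstep x r hr hrΩ A hA hAne hAG h).1)
    hA hAne hAΩ hbd
  have hD : ∀ x r, 0 < r → Metric.closedBall x r ⊆ Ω → Tendsto (fun k =>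
      ∫⁻ y in Metric.ball x r, ∫⁻ z in Metric.ball x r, ‖w k y - w k z‖ₑ ^ p) atTop (𝓝 0) := by
    intro x r hr hrΩ
    obtain ⟨P, hP, hPk⟩ := hpoinc x r hr
    have hE := (hstep x r hr hrΩ _ Metric.isOpen_ball ⟨x, Metric.mem_ball_self hr⟩ subset_rfl
      (hbdd x r hr hrΩ)).2
    have hPE := ENNReal.Tendsto.const_mul hE (Or.inr hP)
    rw [mul_zero] at hPE
    exact tendsto_of_tendsto_of_tendsto_of_le_of_le tendsto_const_nhds hPE
      (fun _ => zero_le) hPk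
  -- base ball
  obtain ⟨x₀, hx₀⟩ := hAne
  obtain ⟨r₀, hr₀, hrA⟩ := Metric.nhds_basis_closedBall.mem_iff.1 (hA.mem_nhds hx₀)
  have hv0 : volume (Metric.ball x₀ r₀) ≠ 0 := (Metric.measure_ball_pos volume x₀ hr₀).ne'
  have hv0' : volume (Metric.ball x₀ r₀) ≠ ⊤ := measure_ball_lt_top.ne
  have hy : ∀ k, ∃ y ∈ Metric.ball x₀ r₀, ∫⁻ z in Metric.ball x₀ r₀, ‖w k y - w k z‖ₑ ^ p ≤
      laverage (volume.restrict (Metric.ball x₀ r₀))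
        (fun y => ∫⁻ z in Metric.ball x₀ r₀, ‖w k y - w k z‖ₑ ^ p) := by
    intro k
    refine exists_le_setLAverage hv0 hv0' ?_
    have m2 : Measurable (fun z : Euc d × Euc d => ‖w k z.1 - w k z.2‖ₑ ^ p) := by
      have := (hwC k).continuous
      have : Continuous (fun z : Euc d × Euc d => w k z.1 - w k z.2) := by fun_prop
      exact this.measurable.enorm.pow_const p
    exact (Measurable.lintegral_prod_right' m2).aemeasurable
  choose y hyb hyle using hy
  have hbase : Tendsto (fun k => ∫⁻ z in Metric.ball x₀ r₀, ‖w k z - w k (y k)‖ₑ ^ p)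
      atTop (𝓝 0) := by
    have h1 := ENNReal.Tendsto.const_mul (a := (volume (Metric.ball x₀ r₀))⁻¹)
      (hD x₀ r₀ hr₀ (hrA.trans hAΩ)) (Or.inr (by simp [hv0]))
    rw [mul_zero] at h1
    refine tendsto_of_tendsto_of_tendsto_of_le_of_le tendsto_const_nhds h1
      (fun _ => zero_le) (fun k => ?_)
    have := hyle k
    rw [setLAverage_eq, ENNReal.div_eq_inv_mul] at this
    simp_rw [enorm_sub_rev (w k _) (w k (y k))]
    exact this
  have hball := chain hΩ hΩc
    (fun A => Tendsto (fun k => ∫⁻ z in A, ‖w k z - w k (y k)‖ₑ ^ p) atTop (𝓝 0))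
    (by
      intro s t hst h
      exact tendsto_of_tendsto_of_tendsto_of_le_of_le tendsto_const_nhds h
        (fun _ => zero_le) (fun k => lintegral_mono_set hst))
    (by
      intro x r hr hrΩ A hAo hAne hAG h
      have hvA : volume A ≠ 0 := (hAo.measure_pos volume hAne).ne'
      have hvA' : volume A ≠ ⊤ := ((measure_mono hAG).trans_lt measure_ball_lt_top).ne
      have hvG : volume (Metric.ball x r) ≠ ⊤ := measure_ball_lt_top.ne
      have h2p : (2 : ℝ≥0∞) ^ (p - 1) ≠ ⊤ :=
        ENNReal.rpow_ne_top_of_nonneg (by linarith) (by simp)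
      have h1 := ENNReal.Tendsto.const_mul (a := volume (Metric.ball x r)) h (Or.inr hvG)
      have h2 := (hD x r hr hrΩ).add h1
      have h3 := ENNReal.Tendsto.const_mul (a := (2 : ℝ≥0∞) ^ (p - 1)) h2 (Or.inr h2p)
      have h4 := ENNReal.Tendsto.const_mul (a := (volume A)⁻¹) h3 (Or.inr (by simp [hvA]))
      simp only [mul_zero, add_zero] at h4
      refine tendsto_of_tendsto_of_tendsto_of_le_of_le tendsto_const_nhds h4
        (fun _ => zero_le) (fun k => ?_)
      have ht := transfer (hwC k).continuous hp hAG (w k (y k))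
      simp only
      rw [← ENNReal.mul_le_iff_le_inv hvA hvA']
      exact ht)
    (A₀ := Metric.ball x₀ r₀) Metric.isOpen_ball ⟨x₀, Metric.mem_ball_self hr₀⟩
    (Metric.ball_subset_closedBall.trans (hrA.trans hAΩ)) hbase
  refine ⟨fun k => w k (y k), fun k => ?_, fun K hK hKΩ => ?_⟩
  · exact div_nonneg (hu0 _ _)
      (hv.2.1 _ (hAΩ (hrA (Metric.ball_subset_closedBall (hyb k))))).le
  · refine hK.induction_on (p := fun s => Tendsto
      (fun k => ∫⁻ z in s, ‖w k z - w k (y k)‖ₑ ^ p) atTop (𝓝 0)) ?_ ?_ ?_ ?_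
    · simp
    · intro s t hst h
      exact tendsto_of_tendsto_of_tendsto_of_le_of_le tendsto_const_nhds h
        (fun _ => zero_le) (fun k => lintegral_mono_set hst)
    · intro s t h1 h2
      have := h1.add h2
      rw [add_zero] at this
      exact tendsto_of_tendsto_of_tendsto_of_le_of_le tendsto_const_nhds this
        (fun _ => zero_le) (fun k => lintegral_union_le _ _ _)
    · intro x hx
      obtain ⟨r, hr, hrΩ⟩ := Metric.nhds_basis_closedBall.mem_iff.1 (hΩ.mem_nhds (hKΩ hx))
      exact ⟨_, mem_nhdsWithin_of_mem_nhds (Metric.ball_mem_nhds x hr), hball x r hr hrΩ⟩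
end
end

section
open MeasureTheory Filter
open scoped RealInnerProductSpace Topology ENNReal
noncomputable section

lemma ofReal_facts {p : ℝ} (hp : 1 < p) : ENNReal.ofReal p ≠ 0 ∧ ENNReal.ofReal p ≠ ⊤ ∧
    (ENNReal.ofReal p).toReal = p ∧ 1 ≤ ENNReal.ofReal p := by
  refine ⟨?_, ENNReal.ofReal_ne_top, ENNReal.toReal_ofReal (by linarith), ?_⟩
  · simp; linarith
  · rw [← ENNReal.ofReal_one]; exact ENNReal.ofReal_le_ofReal hp.le

lemma eLp_rpow {d : ℕ} {p : ℝ} (hp : 1 < p) (f : Euc d → ℝ) (S : Set (Euc d)) :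
    eLpNorm f (ENNReal.ofReal p) (volume.restrict S) = (∫⁻ x in S, ‖f x‖ₑ ^ p) ^ (1 / p) := by
  obtain ⟨h0, ht, hr, _⟩ := ofReal_facts hp
  rw [eLpNorm_eq_lintegral_rpow_enorm_toReal h0 ht, hr]

lemma memLp_cpt {d : ℕ} {K G : Set (Euc d)} (hK : IsCompact K) (hG : G ⊆ K)
    {f : Euc d → ℝ} (hf : ContinuousOn f K) {p : ℝ} (hp : 1 < p) :
    MemLp f (ENNReal.ofReal p) (volume.restrict G) := by
  refine ⟨(hf.aestronglyMeasurable hK.measurableSet).mono_measure (Measure.restrict_mono hG le_rfl),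
    ?_⟩
  rw [eLp_rpow hp]
  exact ENNReal.rpow_lt_top_of_nonneg (by positivity)
    (lintegral_cpt_ne_top hK hG hf (by linarith))

/-- real-valued Lp norm on a set -/
def Nrm {d : ℕ} (p : ℝ) (S : Set (Euc d)) (f : Euc d → ℝ) : ℝ :=
  (eLpNorm f (ENNReal.ofReal p) (volume.restrict S)).toReal

lemma Nrm_nonneg {d : ℕ} (p : ℝ) (S : Set (Euc d)) (f : Euc d → ℝ) : 0 ≤ Nrm p S f :=
  ENNReal.toReal_nonneg

lemma Nrm_add {d : ℕ} {p : ℝ} (hp : 1 < p) {S : Set (Euc d)} {f g : Euc d → ℝ}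
    (hf : MemLp f (ENNReal.ofReal p) (volume.restrict S))
    (hg : MemLp g (ENNReal.ofReal p) (volume.restrict S)) :
    Nrm p S (fun x => f x + g x) ≤ Nrm p S f + Nrm p S g := by
  obtain ⟨h0, ht, hr, h1⟩ := ofReal_facts hp
  unfold Nrm
  rw [← ENNReal.toReal_add hf.2.ne hg.2.ne]
  exact ENNReal.toReal_mono (by simp [hf.2.ne, hg.2.ne]) (eLpNorm_add_le hf.1 hg.1 h1)

lemma Nrm_smul {d : ℕ} {p : ℝ} (S : Set (Euc d)) (c : ℝ) (f : Euc d → ℝ) :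
    Nrm p S (fun x => c * f x) = |c| * Nrm p S f := by
  unfold Nrm
  have := eLpNorm_const_smul c f (ENNReal.ofReal p) (volume.restrict S)
  have h2 : (fun x => c * f x) = c • f := by ext; simp
  rw [h2, this, ENNReal.toReal_mul]; simp

lemma Nrm_int {d : ℕ} {p : ℝ} (hp : 1 < p) {S : Set (Euc d)} {f : Euc d → ℝ}
    (hf : MemLp f (ENNReal.ofReal p) (volume.restrict S)) :
    Nrm p S f = (∫ x in S, |f x| ^ p) ^ (1 / p) := by
  obtain ⟨h0, ht, hr, h1⟩ := ofReal_facts hp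
  unfold Nrm
  rw [hf.eLpNorm_eq_integral_rpow_norm h0 ht, hr, ENNReal.toReal_ofReal]
  · simp
  · apply Real.rpow_nonneg
    exact integral_nonneg fun x => by positivity

lemma conv_part {d : ℕ} {Ω : Set (Euc d)} (hΩ : IsOpen Ω) (hΩc : IsPreconnected Ω) {p : ℝ}
    (hp : 1 < p)
    {V : Euc d → ℝ} (hV : LocBddPotential Ω V) {v : Euc d → ℝ}
    (hv : IsPositiveSupersolution Ω V p v)
    {B : Set (Euc d)} (hBo : IsOpen B) (hBne : B.Nonempty)
    (hBc : IsCompact (closure B)) (hBΩ : closure B ⊆ Ω) :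
    0 < (∫ y in B, v y ^ p) ∧ 
    ∀ u : ℕ → Euc d → ℝ, (∀ k, IsTestFun Ω (u k)) → (∀ k x, 0 ≤ u k x) →
        (∀ k, (∫ x in B, u k x ^ p) = 1) →
        Tendsto (fun k => energyQ Ω V p (u k)) atTop (𝓝 0) →
        ∀ K : Set (Euc d), K ⊆ Ω → IsCompact K →
          Tendsto
            (fun k => ∫ x in K,
              |u k x - (∫ y in B, v y ^ p) ^ (-(1 / p)) * v x| ^ p)
            atTop (𝓝 0) := by
  have hp0 : 0 < p := by linarith
  have hvc : ContinuousOn v Ω := hv.1.continuousOn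
  have hBcl : B ⊆ closure B := subset_closure
  have hBΩ' : B ⊆ Ω := hBcl.trans hBΩ
  have hvpos : 0 < ∫ y in B, v y ^ p := by
    have hi : IntegrableOn (fun y => v y ^ p) B :=
      ((hvc.mono hBΩ).rpow_const (fun x _ => Or.inr hp0.le)).integrableOn_compact hBc
        |>.mono_set hBcl
    have hpos : ∀ x ∈ B, 0 < v x ^ p := fun x hx => Real.rpow_pos_of_pos (hv.2.1 x (hBΩ' hx)) _
    rw [setIntegral_pos_iff_support_of_nonneg_ae
      ((ae_restrict_mem hBo.measurableSet).mono fun x hx => (hpos x hx).le) hi]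
    have : (Function.support fun y => v y ^ p) ∩ B = B := by
      rw [Set.inter_eq_right]
      intro x hx
      exact (hpos x hx).ne'
    rw [this]
    exact hBo.measure_pos _ hBne
  refine ⟨hvpos, ?_⟩
  intro u hu hu0 huB hE
  have huc : ∀ k, Continuous (u k) := fun k => (hu k).1.continuous
  obtain ⟨m, hm, hmv⟩ : ∃ m : ℝ, 0 < m ∧ ∀ x ∈ closure B, m ≤ v x := by
    obtain ⟨x, hx, hxm⟩ := hBc.exists_isMinOn hBne.closure (hvc.mono hBΩ)
    exact ⟨v x, hv.2.1 x (hBΩ hx), fun y hy => hxm hy⟩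
  have hmemu : ∀ k K, IsCompact K → ∀ G, G ⊆ K → MemLp (u k) (ENNReal.ofReal p)
    (volume.restrict G) := fun k K hK G hG => memLp_cpt hK hG (huc k).continuousOn hp
  have hmemv : ∀ K, IsCompact K → K ⊆ Ω → ∀ G, G ⊆ K → MemLp v (ENNReal.ofReal p)
    (volume.restrict G) := fun K hK hKΩ G hG => memLp_cpt hK hG (hvc.mono hKΩ) hp
  have hNu : ∀ k, Nrm p B (u k) = 1 := by
    intro k
    rw [Nrm_int hp (hmemu k _ hBc B hBcl)]
    simp_rw [abs_of_nonneg (hu0 k _)]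
    rw [huB, Real.one_rpow]
  have hlint : ∀ k, ∫⁻ x in B, ‖u k x‖ₑ ^ p = 1 := by
    intro k
    have h1 : eLpNorm (u k) (ENNReal.ofReal p) (volume.restrict B) = 1 := by
      have := hNu k
      unfold Nrm at this
      rwa [ENNReal.toReal_eq_one_iff] at this
    rw [eLp_rpow hp] at h1
    have h2 := congrArg (fun t : ℝ≥0∞ => t ^ p) h1
    simp only [ENNReal.one_rpow] at h2
    rwa [← ENNReal.rpow_mul, one_div_mul_cancel hp0.ne', ENNReal.rpow_one] at h2
  obtain ⟨c, hc0, hc⟩ := core hΩ hΩc hp hV hv hu hu0 hBo hBne hBΩ' (by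
    refine ⟨ENNReal.ofReal (m⁻¹) ^ p, ENNReal.rpow_ne_top_of_nonneg hp0.le ENNReal.ofReal_ne_top,
      Eventually.of_forall fun k => ?_⟩
    calc ∫⁻ x in B, ‖u k x / v x‖ₑ ^ p ≤ ∫⁻ x in B, ENNReal.ofReal (m⁻¹) ^ p * ‖u k x‖ₑ ^ p := by
          apply setLIntegral_mono' hBo.measurableSet
          intro x hx
          rw [← ENNReal.mul_rpow_of_nonneg _ _ hp0.le]
          gcongr
          rw [div_eq_inv_mul, enorm_mul]
          gcongr
          rw [← ofReal_norm, norm_inv]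
          apply ENNReal.ofReal_le_ofReal
          have := hmv x (hBcl hx)
          rw [Real.norm_of_nonneg (by linarith)]
          gcongr
      _ = ENNReal.ofReal (m⁻¹) ^ p := by
          rw [lintegral_const_mul' _ _
            (ENNReal.rpow_ne_top_of_nonneg hp0.le ENNReal.ofReal_ne_top), hlint, mul_one]) hE
  have hN : ∀ K, IsCompact K → K ⊆ Ω → 
      Tendsto (fun k => Nrm p K (fun x => u k x - c k * v x)) atTop (𝓝 0) := by
    intro K hK hKΩ
    obtain ⟨M, hM⟩ := hK.exists_bound_of_continuousOn (hvc.mono hKΩ)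
    have hMt : ENNReal.ofReal M ^ p ≠ ⊤ :=
      ENNReal.rpow_ne_top_of_nonneg hp0.le ENNReal.ofReal_ne_top
    have h1 := ENNReal.Tendsto.const_mul (a := ENNReal.ofReal M ^ p) (hc K hK hKΩ) (Or.inr hMt)
    rw [mul_zero] at h1
    have h2 : Tendsto (fun k => ∫⁻ x in K, ‖u k x - c k * v x‖ₑ ^ p) atTop (𝓝 0) := by
      refine tendsto_of_tendsto_of_tendsto_of_le_of_le tendsto_const_nhds h1
        (fun _ => zero_le) (fun k => ?_)
      simp only
      rw [← lintegral_const_mul' _ _ hMt]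
      apply setLIntegral_mono' hK.measurableSet
      intro x hx
      rw [← ENNReal.mul_rpow_of_nonneg _ _ hp0.le]
      gcongr
      have hvx := (hv.2.1 x (hKΩ hx)).ne'
      have : u k x - c k * v x = v x * (u k x / v x - c k) := by field_simp
      rw [this, enorm_mul]
      gcongr
      rw [← ofReal_norm]
      exact ENNReal.ofReal_le_ofReal (hM x hx)
    have h3 := h2.ennrpow_const (1 / p)
    rw [ENNReal.zero_rpow_of_pos (by positivity)] at h3
    have h4 := (ENNReal.tendsto_toReal (by simp)).comp h3
    refine h4.congr fun k => ?_
    simp only [Function.comp, Nrm]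
    rw [eLp_rpow hp]
  set a := Nrm p B v with ha
  have ha' : a = (∫ y in B, v y ^ p) ^ (1 / p) := by
    rw [ha, Nrm_int hp (hmemv _ hBc hBΩ B hBcl)]
    congr 1
    apply setIntegral_congr_fun hBo.measurableSet
    intro x hx
    simp only
    rw [abs_of_pos (hv.2.1 x (hBΩ' hx))]
  have hapos : 0 < a := by rw [ha']; exact Real.rpow_pos_of_pos hvpos _
  have hcst : (∫ y in B, v y ^ p) ^ (-(1 / p)) = a⁻¹ := by
    rw [ha', Real.rpow_neg hvpos.le]
  rw [hcst]
  have hca : Tendsto c atTop (𝓝 a⁻¹) := by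
    have hb : ∀ k, |c k * a - 1| ≤ Nrm p (closure B) (fun x => u k x - c k * v x) := by
      intro k
      have mu := hmemu k _ hBc B hBcl
      have mv := (hmemv _ hBc hBΩ B hBcl).const_mul (c k)
      have e1 : Nrm p B (fun x => u k x - c k * v x) ≤
          Nrm p (closure B) (fun x => u k x - c k * v x) := by
        unfold Nrm
        apply ENNReal.toReal_mono
        · exact ((hmemu k _ hBc _ subset_rfl).sub
            ((hmemv _ hBc hBΩ _ subset_rfl).const_mul (c k))).2.ne
        · exact eLpNorm_mono_measure _ (Measure.restrict_mono hBcl le_rfl)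
      have hcv : Nrm p B (fun x => c k * v x) = c k * a := by
        rw [Nrm_smul, abs_of_nonneg (hc0 k)]
      have e2 := Nrm_add hp (mu.sub mv) mv
      have e3 := Nrm_add hp mu ((mu.sub mv).const_mul (-1))
      have e4 := Nrm_smul (p := p) B (-1) (fun x => u k x - c k * v x)
      simp only [Pi.sub_apply, sub_add_cancel] at e2 e3
      have e5 : (fun x => u k x + -1 * (u k x - c k * v x)) = fun x => c k * v x := by
        ext x; ring
      rw [e5, hcv, hNu] at e3
      rw [hcv] at e2
      have e6 : Nrm p B (fun x => u k x) = 1 := hNu k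
      rw [e6] at e2
      simp only [abs_neg, abs_one, one_mul] at e4
      have e7 : Nrm p B (u k - fun x => c k * v x) = Nrm p B (fun x => u k x - c k * v x) := rfl
      rw [abs_le]; constructor <;> linarith
    have h1 : Tendsto (fun k => c k * a - 1) atTop (𝓝 0) :=
      squeeze_zero_norm hb (hN _ hBc hBΩ)
    have h2 := (h1.add_const 1).mul_const a⁻¹
    simp only [sub_add_cancel, zero_add, one_mul] at h2
    refine h2.congr fun k => ?_
    field_simp
  intro K hKΩ hK
  have hfin : Tendsto (fun k => Nrm p K (fun x => u k x - a⁻¹ * v x)) atTop (𝓝 0) := by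
    have h1 : Tendsto (fun k => |c k - a⁻¹| * Nrm p K v) atTop (𝓝 0) := by
      have := ((hca.sub_const a⁻¹).abs).mul_const (Nrm p K v)
      simpa using this
    have h2 := (hN K hK hKΩ).add h1
    rw [add_zero] at h2
    refine squeeze_zero (fun k => Nrm_nonneg _ _ _) (fun k => ?_) h2
    have mu := hmemu k _ hK K subset_rfl
    have mv := hmemv _ hK hKΩ K subset_rfl
    have := Nrm_add hp (mu.sub (mv.const_mul (c k))) (mv.const_mul (c k - a⁻¹))
    rw [Nrm_smul] at this
    refine le_trans (le_of_eq ?_) this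
    congr 1
    ext x
    simp only [Pi.sub_apply]
    ring
  have h3 := hfin.rpow_const (p := p) (Or.inr hp0.le)
  rw [Real.zero_rpow hp0.ne'] at h3
  refine h3.congr fun k => ?_
  have hN2 : Nrm p K (fun x => u k x - a⁻¹ * v x) =
      (∫ x in K, |u k x - a⁻¹ * v x| ^ p) ^ (1 / p) :=
    Nrm_int hp ((hmemu k _ hK K subset_rfl).sub
      ((hmemv _ hK hKΩ K subset_rfl).const_mul a⁻¹))
  rw [hN2, ← Real.rpow_mul, one_div_mul_cancel hp0.ne', Real.rpow_one]
  exact integral_nonneg fun x => by positivity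
end
end

section
open MeasureTheory Filter
open scoped RealInnerProductSpace Topology ENNReal
noncomputable section

lemma energy_hom {d : ℕ} {Ω : Set (Euc d)} {p : ℝ} {V : Euc d → ℝ} {f : Euc d → ℝ}
    (hf : ContDiff ℝ 1 f) {c : ℝ} (hc : 0 ≤ c) :
    energyQ Ω V p (fun x => c * f x) = c ^ p * energyQ Ω V p f := by
  unfold energyQ
  rw [← integral_const_mul]
  congr 1
  ext x
  have h1 : ‖gradient (fun x => c * f x) x‖ = c * ‖gradient f x‖ := by
    rw [norm_gradient_eq, norm_gradient_eq,
      fderiv_const_mul (hf.differentiable one_ne_zero x), norm_smul, Real.norm_of_nonneg hc]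
  rw [h1, abs_mul, abs_of_nonneg hc, Real.mul_rpow hc (norm_nonneg _),
    Real.mul_rpow hc (abs_nonneg _)]
  ring

lemma normalize_test {d : ℕ} {Ω B : Set (Euc d)} {p : ℝ} (hp : 1 < p) {V : Euc d → ℝ}
    {f : Euc d → ℝ} (hf : IsTestFun Ω f) (hf0 : ∀ x, 0 ≤ f x) (hI : 0 < ∫ x in B, f x ^ p) :
    ∃ g, IsTestFun Ω g ∧ (∀ x, 0 ≤ g x) ∧ (∫ x in B, g x ^ p) = 1 ∧
      energyQ Ω V p g = energyQ Ω V p f / (∫ x in B, f x ^ p) := by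
  set I := ∫ x in B, f x ^ p with hIdef
  have hp0 : 0 < p := by linarith
  have hc : 0 ≤ I ^ (-(1 / p)) := Real.rpow_nonneg hI.le _
  have hcp : (I ^ (-(1 / p))) ^ p = I⁻¹ := by
    rw [← Real.rpow_mul hI.le, neg_mul, one_div_mul_cancel hp0.ne', Real.rpow_neg_one]
  have hs : tsupport (fun x => I ^ (-(1 / p)) * f x) ⊆ tsupport f :=
    tsupport_sub_aux fun x hx => by simp [hx]
  refine ⟨fun x => I ^ (-(1 / p)) * f x, ⟨contDiff_const.mul hf.1, ?_, hs.trans hf.2.2⟩,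
    fun x => mul_nonneg hc (hf0 x), ?_, ?_⟩
  · exact hf.2.1.of_isClosed_subset (isClosed_tsupport _) hs
  · simp_rw [Real.mul_rpow hc (hf0 _), hcp]
    rw [integral_const_mul, ← hIdef, inv_mul_cancel₀ hI.ne']
  · rw [energy_hom (test_C1 hf) hc, hcp, div_eq_inv_mul]

lemma exists_bump {d : ℕ} {Ω B : Set (Euc d)} {p : ℝ} (hp : 1 < p)
    (hBo : IsOpen B) (hBne : B.Nonempty) (hBΩ : B ⊆ Ω) :
    ∃ f, IsTestFun Ω f ∧ (∀ x, 0 ≤ f x) ∧ 0 < ∫ x in B, f x ^ p := by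
  have hp0 : 0 < p := by linarith
  obtain ⟨x, hx⟩ := hBne
  obtain ⟨f, hfs, hfc, hfd, hfr, hf1⟩ := exists_contDiff_tsupport_subset (n := ⊤) (hBo.mem_nhds hx)
  have hf0 : ∀ y, 0 ≤ f y := fun y => (hfr ⟨y, rfl⟩).1
  refine ⟨f, ⟨hfd, hfc, hfs.trans hBΩ⟩, hf0, ?_⟩
  rw [setIntegral_eq_integral_of_forall_compl_eq_zero]
  · refine Continuous.integral_pos_of_hasCompactSupport_nonneg_nonzero (x := x)
      (hfd.continuous.rpow_const fun _ => Or.inr hp0.le) ?_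
      (fun y => Real.rpow_nonneg (hf0 y) _) (by simp [hf1])
    exact hfc.of_isClosed_subset (isClosed_tsupport _)
      (tsupport_sub_aux fun y hy => by simp [hy, hp0.ne'])
  · intro y hy
    have : f y = 0 := by
      by_contra h
      exact hy (hfs (subset_tsupport _ h))
    simp [this, hp0.ne']

/-- smoothed absolute value -/
def sabs (ε t : ℝ) : ℝ := √(t ^ 2 + ε ^ 2) - ε

lemma sabs_nonneg {ε : ℝ} (t : ℝ) : 0 ≤ sabs ε t := by
  unfold sabs
  have : ε ≤ √(t ^ 2 + ε ^ 2) := Real.le_sqrt_of_sq_le (by nlinarith [sq_nonneg t])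
  linarith

lemma sabs_le {ε : ℝ} (hε : 0 ≤ ε) (t : ℝ) : sabs ε t ≤ |t| := by
  unfold sabs
  have : √(t ^ 2 + ε ^ 2) ≤ |t| + ε := by
    apply Real.sqrt_le_iff.2
    refine ⟨by positivity, ?_⟩
    nlinarith [sq_abs t, abs_nonneg t, mul_nonneg (abs_nonneg t) hε]
  linarith

lemma sabs_zero {ε : ℝ} (hε : 0 ≤ ε) : sabs ε 0 = 0 := by
  simp [sabs, Real.sqrt_sq hε]

lemma sabs_test {d : ℕ} {Ω : Set (Euc d)} {u : Euc d → ℝ} (hu : IsTestFun Ω u) {ε : ℝ}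
    (hε : 0 < ε) : IsTestFun Ω (fun x => sabs ε (u x)) ∧
      ∀ x, ‖gradient (fun x => sabs ε (u x)) x‖ ≤ ‖gradient u x‖ := by
  have hs : tsupport (fun x => sabs ε (u x)) ⊆ tsupport u :=
    tsupport_sub_aux fun x hx => by simp [hx, sabs_zero hε.le]
  have hne : ∀ x, u x ^ 2 + ε ^ 2 ≠ 0 := fun x => by positivity
  refine ⟨⟨?_, hu.2.1.of_isClosed_subset (isClosed_tsupport _) hs, hs.trans hu.2.2⟩, fun x => ?_⟩
  · exact (((hu.1.pow 2).add contDiff_const).sqrt hne).sub contDiff_const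
  · rw [norm_gradient_eq, norm_gradient_eq]
    have h1 : HasFDerivAt u (fderiv ℝ u x) x :=
      ((test_C1 hu).differentiable one_ne_zero x).hasFDerivAt
    have h3 : HasDerivAt (sabs ε) (1 / (2 * √(u x ^ 2 + ε ^ 2)) * (2 * u x)) (u x) := by
      unfold sabs
      have := (((hasDerivAt_pow 2 (u x)).add_const (ε ^ 2)).sqrt (hne x)).sub_const ε
      have e : 1 / (2 * √(u x ^ 2 + ε ^ 2)) * (2 * u x) =
          ((2 : ℕ) : ℝ) * u x ^ (2 - 1) / (2 * √(u x ^ 2 + ε ^ 2)) := by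
        norm_num
        ring
      rw [e]
      exact this
    have h4 := h3.comp_hasFDerivAt x h1
    have h5 : fderiv ℝ (fun x => sabs ε (u x)) x =
      (1 / (2 * √(u x ^ 2 + ε ^ 2)) * (2 * u x)) • fderiv ℝ u x := h4.fderiv
    rw [h5, norm_smul]
    have hsq : 0 < √(u x ^ 2 + ε ^ 2) := Real.sqrt_pos.2 (by positivity)
    have h6 : ‖1 / (2 * √(u x ^ 2 + ε ^ 2)) * (2 * u x)‖ ≤ 1 := by
      have e : 1 / (2 * √(u x ^ 2 + ε ^ 2)) * (2 * u x) = u x / √(u x ^ 2 + ε ^ 2) := by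
        field_simp
      rw [e, norm_div, Real.norm_of_nonneg hsq.le, div_le_one hsq, Real.norm_eq_abs]
      exact Real.abs_le_sqrt (by nlinarith [sq_nonneg ε])
    nlinarith [norm_nonneg (fderiv ℝ u x)]

lemma nonneg_approx {d : ℕ} {Ω B : Set (Euc d)} (hΩ : IsOpen Ω) (hBo : IsOpen B) {p : ℝ}
    (hp : 1 < p)
    {V : Euc d → ℝ} (hV : LocBddPotential Ω V) {u : Euc d → ℝ} (hu : IsTestFun Ω u)
    (huB : (∫ x in B, |u x| ^ p) = 1) {q : ℝ} (hq : energyQ Ω V p u < q) :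
    ∃ g, IsTestFun Ω g ∧ (∀ x, 0 ≤ g x) ∧ (∫ x in B, g x ^ p) = 1 ∧ energyQ Ω V p g < q := by
  have hp0 : 0 < p := by linarith
  let ε : ℕ → ℝ := fun n => 1 / ((n : ℝ) + 1)
  have hε : ∀ n, 0 < ε n := fun n => by positivity
  have hε0 : Tendsto ε atTop (𝓝 0) := tendsto_one_div_add_atTop_nhds_zero_nat
  let f : ℕ → Euc d → ℝ := fun n x => sabs (ε n) (u x)
  have hft : ∀ n, IsTestFun Ω (f n) := fun n => (sabs_test hu (hε n)).1
  have hfg : ∀ n x, ‖gradient (f n) x‖ ≤ ‖gradient u x‖ := fun n => (sabs_test hu (hε n)).2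
  have hf0 : ∀ n x, 0 ≤ f n x := fun n x => sabs_nonneg _
  have hfu : ∀ n x, f n x ≤ |u x| := fun n x => sabs_le (hε n).le _
  have hlim : ∀ x, Tendsto (fun n => f n x ^ p) atTop (𝓝 (|u x| ^ p)) := by
    intro x
    have h1 : Tendsto (fun n => f n x) atTop (𝓝 |u x|) := by
      have hc : Continuous (fun e : ℝ => sabs e (u x)) := by unfold sabs; fun_prop
      have := (hc.tendsto 0).comp hε0
      have e : sabs 0 (u x) = |u x| := by simp [sabs, Real.sqrt_sq_eq_abs]
      rw [e] at this
      exact this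
    exact h1.rpow_const (Or.inr hp0.le)
  have huc : Continuous u := (test_C1 hu).continuous
  have hfcont : ∀ n, Continuous (fun x => f n x ^ p) := fun n =>
    (test_C1 (hft n)).continuous.rpow_const fun _ => Or.inr hp0.le
  have hucont : Continuous (fun x => |u x| ^ p) := huc.abs.rpow_const fun _ => Or.inr hp0.le
  have hle : ∀ n x, f n x ^ p ≤ |u x| ^ p := fun n x =>
    Real.rpow_le_rpow (hf0 n x) (hfu n x) hp0.le
  obtain ⟨hI1, hI2⟩ := energy_integrable hΩ hp hV (test_C1 hu) hu.2.1 huc hu.2.1 hu.2.2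
  have hA : Tendsto (fun n => ∫ x in B, f n x ^ p) atTop (𝓝 1) := by
    rw [← huB]
    refine tendsto_integral_of_dominated_convergence (fun x => |u x| ^ p)
      (fun n => (hfcont n).aestronglyMeasurable) ?_ (fun n => ?_) (ae_of_all _ hlim)
    · refine (hucont.integrable_of_hasCompactSupport ?_).integrableOn
      exact hu.2.1.of_isClosed_subset (isClosed_tsupport _)
        (tsupport_sub_aux fun y hy => by simp [hy, hp0.ne'])
    · refine ae_of_all _ fun x => ?_
      rw [Real.norm_of_nonneg (Real.rpow_nonneg (hf0 n x) _)]
      exact hle n x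
  have hT : Tendsto (fun n => ∫ x in Ω, V x * f n x ^ p) atTop (𝓝 (∫ x in Ω, V x * |u x| ^ p)) := by
    refine tendsto_integral_of_dominated_convergence (fun x => ‖V x * |u x| ^ p‖)
      (fun n => hV.1.aestronglyMeasurable.mul (hfcont n).aestronglyMeasurable) hI2.norm
      (fun n => ?_) (ae_of_all _ fun x => (hlim x).const_mul _)
    refine ae_of_all _ fun x => ?_
    rw [norm_mul, norm_mul, Real.norm_of_nonneg (Real.rpow_nonneg (hf0 n x) _),
      Real.norm_of_nonneg (Real.rpow_nonneg (abs_nonneg _) _)]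
    exact mul_le_mul_of_nonneg_left (hle n x) (norm_nonneg _)
  have hQf : ∀ n, energyQ Ω V p (f n) ≤ (∫ x in Ω, ‖gradient u x‖ ^ p) +
      ∫ x in Ω, V x * f n x ^ p := by
    intro n
    obtain ⟨hJ1, hJ2⟩ := energy_integrable hΩ hp hV (test_C1 (hft n)) (hft n).2.1
      (test_C1 (hft n)).continuous (hft n).2.1 (hft n).2.2
    unfold energyQ
    rw [integral_add hJ1 hJ2]
    simp_rw [abs_of_nonneg (hf0 n _)]
    simp_rw [abs_of_nonneg (hf0 n _)] at hJ2
    have := integral_mono hJ1 hI1 fun x => Real.rpow_le_rpow (norm_nonneg _) (hfg n x) hp0.le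
    exact add_le_add_left this _
  have hlimQ : Tendsto (fun n => ((∫ x in Ω, ‖gradient u x‖ ^ p) +
      ∫ x in Ω, V x * f n x ^ p) / ∫ x in B, f n x ^ p) atTop (𝓝 (energyQ Ω V p u)) := by
    have h := (hT.const_add (∫ x in Ω, ‖gradient u x‖ ^ p)).div hA one_ne_zero
    have e : energyQ Ω V p u = ((∫ x in Ω, ‖gradient u x‖ ^ p) + ∫ x in Ω, V x * |u x| ^ p) / 1 := by
      rw [div_one]; exact integral_add hI1 hI2
    rw [e]; exact h
  obtain ⟨n, hn1, hn2⟩ := ((hlimQ.eventually_lt_const hq).and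
    (hA.eventually_const_lt one_pos)).exists
  obtain ⟨g, hg, hg0, hg1, hgQ⟩ := normalize_test (V := V) hp (hft n) (hf0 n) hn2
  refine ⟨g, hg, hg0, hg1, ?_⟩
  rw [hgQ]
  refine lt_of_le_of_lt ?_ hn1
  gcongr
  exact hQf n

lemma exists_null {d : ℕ} {Ω B : Set (Euc d)} (hΩ : IsOpen Ω) (hBo : IsOpen B)
    (hBne : B.Nonempty) (hBΩ : B ⊆ Ω) {p : ℝ}
    (hp : 1 < p) {V : Euc d → ℝ} (hV : LocBddPotential Ω V)
    (hQ : ∀ u : Euc d → ℝ, IsTestFun Ω u → 0 ≤ energyQ Ω V p u)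
    (hcB : cB Ω B V p = 0) :
    ∃ u : ℕ → Euc d → ℝ, (∀ k, IsTestFun Ω (u k)) ∧ (∀ k x, 0 ≤ u k x) ∧
      (∀ k, (∫ x in B, u k x ^ p) = 1) ∧
      Tendsto (fun k => energyQ Ω V p (u k)) atTop (𝓝 0) := by
  have hne : { q : ℝ | ∃ u : Euc d → ℝ, IsTestFun Ω u ∧ (∫ x in B, |u x| ^ p) = 1 ∧
      q = energyQ Ω V p u }.Nonempty := by
    obtain ⟨f, hf, hf0, hfI⟩ := exists_bump (Ω := Ω) hp hBo hBne hBΩ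
    obtain ⟨g, hg, hg0, hg1, _⟩ := normalize_test (V := V) hp hf hf0 hfI
    refine ⟨_, g, hg, ?_, rfl⟩
    simp_rw [abs_of_nonneg (hg0 _)]
    exact hg1
  have h : ∀ k : ℕ, ∃ g, IsTestFun Ω g ∧ (∀ x, 0 ≤ g x) ∧ (∫ x in B, g x ^ p) = 1 ∧
      energyQ Ω V p g < 1 / ((k : ℝ) + 1) := by
    intro k
    obtain ⟨q, ⟨u, hu, hu1, rfl⟩, hq⟩ := exists_lt_of_csInf_lt hne
      (b := 1 / ((k : ℝ) + 1)) (by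
        have : (0 : ℝ) < 1 / ((k : ℝ) + 1) := by positivity
        unfold cB at hcB
        rwa [hcB])
    exact nonneg_approx hΩ hBo hp hV hu hu1 hq
  choose u hu hu0 hu1 hq using h
  exact ⟨u, hu, hu0, hu1, squeeze_zero (fun k => hQ _ (hu k)) (fun k => (hq k).le)
    tendsto_one_div_add_atTop_nhds_zero_nat⟩
end
end

/-- If `Q ≥ 0`, `v` is a positive supersolution of `Q'(u)=0` in `Ω` and `c_B = 0`
for some nonempty open `B ⋐ Ω`, then every sequence of nonnegative test functions
normalized in `L^p(B)` whose energies tend to `0` converges in `L^p_loc(Ω)` to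
`c v` with `c = (∫_B v^p)^{-1/p}`; in particular `Q` admits a ground state. -/
theorem null_sequence_tendsto_groundState {d : ℕ} (hd : 2 ≤ d)
    (Ω : Set (Euc d)) (hΩo : IsOpen Ω) (hΩc : IsConnected Ω)
    {p : ℝ} (hp₁ : 1 < p) (V : Euc d → ℝ) (hV : LocBddPotential Ω V)
    (hQ : ∀ u : Euc d → ℝ, IsTestFun Ω u → 0 ≤ energyQ Ω V p u)
    (v : Euc d → ℝ) (hv : IsPositiveSupersolution Ω V p v)
    (B : Set (Euc d)) (hBo : IsOpen B) (hBne : B.Nonempty)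
    (hBc : IsCompact (closure B)) (hBΩ : closure B ⊆ Ω)
    (hcB : cB Ω B V p = 0) :
    (∀ u : ℕ → Euc d → ℝ, (∀ k, IsTestFun Ω (u k)) → (∀ k x, 0 ≤ u k x) →
        (∀ k, (∫ x in B, u k x ^ p) = 1) →
        Tendsto (fun k => energyQ Ω V p (u k)) atTop (𝓝 0) →
        ∀ K : Set (Euc d), K ⊆ Ω → IsCompact K →
          Tendsto
            (fun k => ∫ x in K,
              |u k x - (∫ y in B, v y ^ p) ^ (-(1 / p)) * v x| ^ p)
            atTop (𝓝 0)) ∧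
      ∃ w : Euc d → ℝ, IsGroundState Ω V p w := by
  obtain ⟨hpos, hconv⟩ := conv_part hΩo hΩc.isPreconnected hp₁ hV hv hBo hBne hBc hBΩ
  refine ⟨hconv, ?_⟩
  obtain ⟨u, hu, hu0, hu1, huQ⟩ := exists_null hΩo hBo hBne (subset_closure.trans hBΩ) hp₁ hV hQ hcB
  refine ⟨fun x => (∫ y in B, v y ^ p) ^ (-(1 / p)) * v x, contDiffOn_const.mul hv.1,
    fun x hx => mul_pos (Real.rpow_pos_of_pos hpos _) (hv.2.1 x hx), u,
    ⟨hu, hu0, B, hBo, hBc, hBΩ, hu1, huQ⟩, hconv u hu hu0 hu1 huQ⟩
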